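/- For every integer g ≥ 5, there exists a snark (a cyclically 4-edge-connected cubic graph of girth at least 5 that is not 3-edge-colourable) with girth at least g and circumference deficit at least g. -/

import Mathlib

open SimpleGraph

/-- A cubic (3-regular) graph. -/
def IsCubic {V : Type*} (G : SimpleGraph V) : Prop := ∀ v, (G.neighborSet v).ncard = 3

/-- A graph contains a cycle. -/
def HasCycle {V : Type*} (G : SimpleGraph V) : Prop := ∃ (u : V) (w : G.Walk u u), w.IsCycle

/-- The circumference of a graph: the length of a longest cycle. -/
noncomputable def circumference {V : Type*} (G : SimpleGraph V) : ℕ :=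
  sSup {n | ∃ (u : V) (w : G.Walk u u), w.IsCycle ∧ w.length = n}

/-- A graph is cyclically k-edge-connected if every edge cut separating two
cycle-containing parts has at least k edges. -/
def CyclicallyEdgeConnected {V : Type*} (G : SimpleGraph V) (k : ℕ) : Prop :=
  ∀ S : Set V, HasCycle (G.induce S) → HasCycle (G.induce Sᶜ) →
    k ≤ {e ∈ G.edgeSet | ∃ a ∈ S, ∃ b ∈ Sᶜ, e = s(a, b)}.ncard

def EdgesShare {V : Type*} (e₁ e₂ : Sym2 V) : Prop := ∃ v, v ∈ e₁ ∧ v ∈ e₂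

def IsProper3EdgeColoring {V : Type*} (G : SimpleGraph V) (c : Sym2 V → Fin 3) : Prop :=
  ∀ e₁ ∈ G.edgeSet, ∀ e₂ ∈ G.edgeSet, e₁ ≠ e₂ → EdgesShare e₁ e₂ → c e₁ ≠ c e₂

def Is3EdgeColorable {V : Type*} (G : SimpleGraph V) : Prop :=
  ∃ c, IsProper3EdgeColoring G c

/-!
A proper colouring of a cubic graph with three colours is a nowhere-zero flow with values in the
Klein four-group, and such a flow survives the contraction of disjoint parts to single vertices.
So it suffices to find a template, in which some vertices may have degree larger than three, that
has no such flow: each of these supervertices is then replaced by a cubic Cayley graph of large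
girth, some of whose edges are subdivided to attach the edges of the template. Cayley graphs of
groups generated by three involutions are used because every cut of theirs with fewer than four
edges isolates at most one vertex, so that the result is cyclically 4-edge-connected.

The template is a flower of `g + 1` petals glued together at a single supervertex. A petal is
assembled from pieces of the Petersen graph in such a way that no nowhere-zero flow satisfies
Kirchhoff's law at all of its vertices, even if nothing is asked of the common supervertex. Along
a cycle, colour the edges alternately with two colours and all other edges with the third one: the
result is proper at every vertex of the cycle except possibly the first one. Hence every cycle
misses a vertex over each petal, except possibly the petal under its first vertex, and therefore
it misses at least `g` vertices.
-/

/-! ### Cycles, cuts and flows -/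

section Cycles

variable {V : Type*} {G : SimpleGraph V}

theorem isAcyclic_of_height (h : V → ℕ)
    (hh : ∀ v u u', G.Adj v u → G.Adj v u' → h u ≤ h v → h u' ≤ h v → u = u') :
    G.IsAcyclic := by
  classical
  intro v w hw
  obtain ⟨z, hz, hmax⟩ := w.support.toFinset.exists_max_image h ⟨v, by simp⟩
  simp only [List.mem_toFinset] at hz hmax
  have hc := hw.rotate hz
  have hle : ∀ x ∈ (w.rotate z hz).support, h x ≤ h z := fun x hx =>
    hmax x ((Walk.mem_support_rotate_iff ..).1 hx)
  exact hc.snd_ne_penultimate <| hh z _ _ (Walk.adj_snd hc.not_nil)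
    (Walk.adj_penultimate hc.not_nil).symm (hle _ (Walk.getVert_mem_support _ _))
    (hle _ (Walk.getVert_mem_support _ _))

theorem not_isAcyclic_of_two_le_ncard_neighborSet [Finite V] [Nonempty V]
    (hG : ∀ v, 2 ≤ (G.neighborSet v).ncard) : ¬ G.IsAcyclic := by
  intro hac
  obtain ⟨u, v, p, hp, hmax⟩ := Walk.exists_isPath_forall_isPath_length_le_length G
  obtain ⟨x, (hx : G.Adj v x), hne⟩ := Set.exists_ne_of_one_lt_ncard (hG v) p.penultimate
  have hpath := hp.concat (fun hmem => hne (hac.eq_penultimate_of_adj_end hp hx hmem)) hx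
  have hlen := hmax _ _ _ hpath
  rw [Walk.length_concat] at hlen
  omega

theorem length_le_ncard_of_isCycle [Finite V] {u : V} {w : G.Walk u u} (hw : w.IsCycle)
    {S : Set V} (hS : ∀ v ∈ w.support, v ∈ S) : w.length ≤ S.ncard := by
  classical
  calc w.length = w.support.tail.toFinset.card := by
        rw [List.toFinset_card_of_nodup hw.support_nodup, List.length_tail, Walk.length_support,
          Nat.add_sub_cancel]
    _ ≤ S.ncard := by
        rw [← Set.ncard_coe_finset]
        exact Set.ncard_le_ncard fun v hv => hS v (List.mem_of_mem_tail (List.mem_toFinset.1 hv))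

theorem HasCycle.exists_isCycle_length_le [Finite V] {S : Set V} (h : HasCycle (G.induce S)) :
    ∃ (u : V) (w : G.Walk u u), w.IsCycle ∧ w.length ≤ S.ncard := by
  obtain ⟨u, w, hw⟩ := h
  have hinj : Function.Injective (Embedding.induce (G := G) S).toHom := Subtype.val_injective
  refine ⟨_, w.map (Embedding.induce (G := G) S).toHom, hw.map hinj, ?_⟩
  refine length_le_ncard_of_isCycle (hw.map hinj) fun v hv => ?_
  obtain ⟨a, -, rfl⟩ := List.mem_map.1 (Walk.support_map _ w ▸ hv)
  exact a.2

theorem le_girth_of_forall_isCycle [Finite V] [Nonempty V]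
    (hG : ∀ v, 2 ≤ (G.neighborSet v).ncard) {n : ℕ}
    (h : ∀ (u : V) (w : G.Walk u u), w.IsCycle → n ≤ w.length) : n ≤ G.girth := by
  obtain ⟨u, w, hw, hlen⟩ :=
    exists_girth_eq_length.2 (not_isAcyclic_of_two_le_ncard_neighborSet hG)
  exact hlen ▸ h u w hw

theorem le_card_sub_circumference [Fintype V] {n : ℕ} (hG : ¬ G.IsAcyclic)
    (h : ∀ (u : V) (w : G.Walk u u), w.IsCycle → w.length + n ≤ Fintype.card V) :
    n ≤ Fintype.card V - circumference G := by
  have hcirc : circumference G ≤ Fintype.card V - n := by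
    refine csSup_le' ?_
    rintro _ ⟨u, w, hw, rfl⟩
    exact Nat.le_sub_of_add_le (h u w hw)
  obtain ⟨u, w, hw, -⟩ := exists_girth_eq_length.2 hG
  have := h u w hw
  omega

end Cycles

section Crossing

variable {V : Type*} {G : SimpleGraph V} {S : Set V}

/-- The edge cut of `S`, each of its edges being directed from `S` to `Sᶜ`. -/
def crossing (G : SimpleGraph V) (S : Set V) : Set (V × V) :=
  {q | q.1 ∈ S ∧ q.2 ∉ S ∧ G.Adj q.1 q.2}

theorem ncard_crossing_le_ncard_cut [Finite V] :
    (crossing G S).ncard ≤ {e ∈ G.edgeSet | ∃ a ∈ S, ∃ b ∈ Sᶜ, e = s(a, b)}.ncard := by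
  refine Set.ncard_le_ncard_of_injOn (fun q => s(q.1, q.2)) ?_ ?_ (Set.toFinite _)
  · rintro ⟨a, b⟩ ⟨ha, hb, hab⟩
    exact ⟨hab, a, ha, b, hb, rfl⟩
  · rintro ⟨a, b⟩ ⟨ha, -, -⟩ ⟨c, d⟩ ⟨-, hd, -⟩ h
    rcases Sym2.eq_iff.1 h with ⟨rfl, rfl⟩ | ⟨rfl, rfl⟩
    · rfl
    · exact absurd ha hd

end Crossing

section Flows

/-- The Klein four-group; a proper colouring of a cubic graph by its nonzero elements is the same
thing as a nowhere-zero flow with values in it. -/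
abbrev Klein : Type := ZMod 2 × ZMod 2

/-- A Klein flow on `G` that is nonzero exactly on the edges, with Kirchhoff's law imposed at the
vertices of `S` only. -/
def HasFlowOn {V : Type*} [Fintype V] (G : SimpleGraph V) (S : Set V) : Prop :=
  ∃ c : V → V → Klein, (∀ u v, c u v = c v u) ∧ (∀ u v, c u v ≠ 0 ↔ G.Adj u v) ∧
    ∀ v ∈ S, ∑ u, c v u = 0

/-- The colouring `c` of the edges of `G` gives distinct colours to the edges at each vertex
of `S`. -/
def IsRainbowOn {V : Type*} (G : SimpleGraph V) (c : Sym2 V → Fin 3) (S : Set V) : Prop :=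
  ∀ v ∈ S, Set.InjOn (fun u => c s(v, u)) (G.neighborSet v)

variable {V : Type*} {G : SimpleGraph V} {S : Set V}

theorem sum_eq_sum_of_neighborSet_eq {κ M : Type*} [Fintype V] [Fintype κ] [AddCommMonoid M]
    {v : V} {e : κ → V} (he : Function.Injective e) (hrange : G.neighborSet v = Set.range e)
    {c : V → M} (hc : ∀ u, ¬ G.Adj v u → c u = 0) : ∑ u, c u = ∑ k, c (e k) :=
  (Fintype.sum_of_injective e he _ _ (fun u hu => hc u fun h => hu (hrange.le h))
    fun _ => rfl).symm

theorem HasFlowOn.mono [Fintype V] {S' : Set V} (h : HasFlowOn G S) (hS : S' ⊆ S) :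
    HasFlowOn G S' :=
  let ⟨c, hsymm, hadj, hsum⟩ := h
  ⟨c, hsymm, hadj, fun v hv => hsum v (hS hv)⟩

theorem Is3EdgeColorable.exists_isRainbowOn (h : Is3EdgeColorable G) :
    ∃ c, IsRainbowOn G c Set.univ := by
  obtain ⟨c, hc⟩ := h
  refine ⟨c, fun v _ u hu u' hu' heq => by_contra fun hne => ?_⟩
  exact hc s(v, u) hu s(v, u') hu' (fun h => hne (Sym2.congr_right.1 h))
    ⟨v, Sym2.mem_mk_left _ _, Sym2.mem_mk_left _ _⟩ heq

theorem IsRainbowOn.hasFlowOn [Fintype V] {c : Sym2 V → Fin 3} (hG : IsCubic G)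
    (hc : IsRainbowOn G c S) : HasFlowOn G S := by
  classical
  let κ : Fin 3 → Klein := ![(1, 0), (0, 1), (1, 1)]
  have hκ : ∀ i, κ i ≠ 0 := by decide
  refine ⟨fun u v => if G.Adj u v then κ (c s(u, v)) else 0, fun u v => ?_, fun u v => ?_,
    fun v hv => ?_⟩
  · simp only [Sym2.eq_swap, G.adj_comm]
  · simp [hκ]
  · have hinj : Set.InjOn (fun u => c s(v, u)) (Finset.univ.filter (G.Adj v)) := by
      simpa [neighborSet] using hc v hv
    have hcard : (Finset.univ.filter (G.Adj v)).card = 3 := by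
      rw [← hG v, ← Set.ncard_coe_finset]
      simp [neighborSet]
    have himage : (Finset.univ.filter (G.Adj v)).image (fun u => c s(v, u)) = Finset.univ :=
      Finset.eq_univ_of_card _ (by rw [Finset.card_image_of_injOn hinj, hcard, Fintype.card_fin])
    rw [← Finset.sum_filter, ← Finset.sum_image (f := κ) hinj, himage]
    decide

theorem eq_or_eq_of_getVert_mem_edge {z : V} {w : G.Walk z z} (hw : w.IsCycle) {j m : ℕ}
    (hj : 0 < j) (hjn : j < w.length) (hm : m < w.length)
    (hmem : w.getVert j ∈ s(w.getVert m, w.getVert (m + 1))) : m = j ∨ m + 1 = j := by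
  rcases Sym2.mem_iff.1 hmem with h | h
  · exact Or.inl (hw.getVert_injOn' (show m ≤ _ by omega) (show j ≤ _ by omega) h.symm)
  · exact Or.inr (hw.getVert_injOn (show 1 ≤ m + 1 ∧ _ by omega) (show 1 ≤ j ∧ _ by omega) h.symm)

/-- Edges of the cycle are coloured by the parity of their position, all the others by `2`. -/
theorem IsCubic.exists_isRainbowOn_support (hG : IsCubic G) {z : V} {w : G.Walk z z}
    (hw : w.IsCycle) : ∃ c, IsRainbowOn G c {v | v ∈ w.support ∧ v ≠ z} := by
  classical
  let c : Sym2 V → Fin 3 := fun e =>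
    if e ∈ w.edges then (if w.edges.idxOf e % 2 = 0 then 0 else 1) else 2
  refine ⟨c, ?_⟩
  rintro v ⟨hv, hvz⟩ u hu u' hu' heq
  obtain ⟨j, rfl, hjn⟩ := Walk.mem_support_iff_exists_getVert.1 hv
  have hj : 0 < j := Nat.pos_of_ne_zero fun h => hvz (h ▸ w.getVert_zero)
  have hjn : j < w.length := hjn.lt_of_ne fun h => hvz (h ▸ w.getVert_length)
  have hidx : ∀ {x}, s(w.getVert j, x) ∈ w.edges →
      w.edges.idxOf s(w.getVert j, x) = j ∨ w.edges.idxOf s(w.getVert j, x) + 1 = j := by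
    intro x hx
    have hlt := List.idxOf_lt_length_iff.2 hx
    refine eq_or_eq_of_getVert_mem_edge hw hj hjn (w.length_edges ▸ hlt) ?_
    rw [← Walk.getElem_edges hlt, List.getElem_idxOf]
    exact Sym2.mem_mk_left _ _
  have hedge : ∀ {x}, s(w.getVert j, x) ∈ w.edges ↔ x ∈ w.toSubgraph.neighborSet (w.getVert j) := by
    simp [Walk.adj_toSubgraph_iff_mem_edges]
  have hout :
      (G.neighborSet (w.getVert j) \ w.toSubgraph.neighborSet (w.getVert j)).ncard ≤ 1 := by
    rw [Set.ncard_sdiff (Subgraph.neighborSet_subset _ _) w.finite_neighborSet_toSubgraph, hG,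
      hw.ncard_neighborSet_toSubgraph_eq_two hv]
  by_cases hmem : s(w.getVert j, u) ∈ w.edges <;> by_cases hmem' : s(w.getVert j, u') ∈ w.edges
  · have hpos : w.edges.idxOf s(w.getVert j, u) = w.edges.idxOf s(w.getVert j, u') := by
      have := hidx hmem
      have := hidx hmem'
      grind
    exact Sym2.congr_right.1 ((List.idxOf_inj hmem).1 hpos)
  · grind
  · grind
  · have hfin : (G.neighborSet (w.getVert j)).Finite :=
      Set.finite_of_ncard_ne_zero (by rw [hG]; decide)
    exact (Set.ncard_le_one_iff hfin.sdiff).1 hout ⟨hu, hedge.not.1 hmem⟩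
      ⟨hu', hedge.not.1 hmem'⟩

theorem length_add_card_le_of_not_hasFlowOn [Fintype V] {ι : Type*} [Fintype ι] (hG : IsCubic G)
    {P : ι → Set V} (hdisj : ∀ i j, i ≠ j → Disjoint (P i) (P j)) (hP : ∀ i, ¬ HasFlowOn G (P i))
    {u : V} {w : G.Walk u u} (hw : w.IsCycle) : w.length + Fintype.card ι ≤ Fintype.card V + 1 := by
  classical
  have hmiss : ∀ i, u ∉ P i → ∃ v ∈ P i, v ∉ w.support := by
    intro i hu
    by_contra! hcover
    obtain ⟨c, hc⟩ := hG.exists_isRainbowOn_support hw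
    exact hP i ((hc.hasFlowOn hG).mono fun v hv => ⟨hcover v hv, fun h => hu (h ▸ hv)⟩)
  have : Nonempty V := ⟨u⟩
  choose! v hvP hvw using hmiss
  let I : Finset ι := Finset.univ.filter fun i => u ∉ P i
  have hI : Fintype.card ι ≤ I.card + 1 := by
    have hone : (Finset.univ.filter fun i => u ∈ P i).card ≤ 1 := by
      refine Finset.card_le_one.2 fun i hi j hj => by_contra fun hij => ?_
      exact Set.disjoint_left.1 (hdisj i j hij) (Finset.mem_filter.1 hi).2
        (Finset.mem_filter.1 hj).2
    have := Finset.card_filter_add_card_filter_not (s := Finset.univ) fun i => u ∈ P i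
    rw [Finset.card_univ] at this
    change _ + I.card = _ at this
    omega
  have hinj : Set.InjOn v I :=
    fun i hi j hj hij => by_contra fun hne =>
      Set.disjoint_left.1 (hdisj i j hne) (hvP i (Finset.mem_filter.1 hi).2)
        (hij ▸ hvP j (Finset.mem_filter.1 hj).2)
  have hlen : w.length ≤ (I.image v : Set V)ᶜ.ncard := by
    refine length_le_ncard_of_isCycle hw fun x hx hxI => ?_
    obtain ⟨i, hi, rfl⟩ := Finset.mem_image.1 hxI
    exact hvw i (Finset.mem_filter.1 hi).2 hx
  have hcompl := Set.ncard_add_ncard_compl (I.image v : Set V)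
  rw [Set.ncard_coe_finset, Nat.card_eq_fintype_card, Finset.card_image_of_injOn hinj] at hcompl
  omega

end Flows

section Contraction

variable {V X : Type*} {G : SimpleGraph V} {T : SimpleGraph X} {π : V → X}

/-- `π` contracts disjoint parts of `G` to single vertices, the result being the simple graph `T`:
there are no parallel edges between two parts. -/
structure IsContraction (G : SimpleGraph V) (T : SimpleGraph X) (π : V → X) : Prop where
  adj_of_adj : ∀ {u v}, G.Adj u v → π u ≠ π v → T.Adj (π u) (π v)
  existsUnique_adj : ∀ {x y}, T.Adj x y → ∃! q : V × V, G.Adj q.1 q.2 ∧ π q.1 = x ∧ π q.2 = y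

theorem sum_sum_eq_zero_of_symm {M : Type*} [Semiring M] [CharP M 2] {c : V → V → M}
    (F : Finset V) (hsymm : ∀ u v, c u v = c v u) (hdiag : ∀ v, c v v = 0) :
    ∑ u ∈ F, ∑ v ∈ F, c u v = 0 := by
  rw [← Finset.sum_product']
  refine Finset.sum_involution (fun q _ => q.swap) ?_ ?_ ?_ ?_
  · intro q _
    rw [Prod.fst_swap, Prod.snd_swap, hsymm q.2, CharTwo.add_self_eq_zero]
  · rintro ⟨u, v⟩ _ hne heq
    obtain rfl : v = u := congrArg Prod.fst heq
    exact hne (hdiag v)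
  · exact fun q hq => by simpa [and_comm] using hq
  · exact fun q _ => q.swap_swap

theorem IsContraction.hasFlowOn [Fintype V] [Fintype X] (hπ : IsContraction G T π) {S : Set X}
    (h : HasFlowOn G (π ⁻¹' S)) : HasFlowOn T S := by
  classical
  obtain ⟨c, hsymm, hadj, hsum⟩ := h
  let F : X → Finset V := fun x => Finset.univ.filter (π · = x)
  have hF : ∀ {x v}, v ∈ F x ↔ π v = x := by simp [F]
  refine ⟨fun x y => if x = y then 0 else ∑ u ∈ F x, ∑ v ∈ F y, c u v, fun x y => ?_, fun x y => ?_,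
    fun x hx => ?_⟩
  · simp only [eq_comm (a := y), Finset.sum_comm (s := F y), hsymm]
  · refine ⟨fun hne => ?_, fun hxy => ?_⟩
    · obtain ⟨hxy, hsum⟩ : x ≠ y ∧ ∑ u ∈ F x, ∑ v ∈ F y, c u v ≠ 0 := by
        simpa using hne
      obtain ⟨u, hu, hsum⟩ := Finset.exists_ne_zero_of_sum_ne_zero hsum
      obtain ⟨v, hv, hc⟩ := Finset.exists_ne_zero_of_sum_ne_zero hsum
      rw [hF] at hu hv
      subst hu hv
      exact hπ.adj_of_adj ((hadj u v).1 hc) hxy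
    · obtain ⟨⟨u, v⟩, ⟨huv, hu, hv⟩, huniq⟩ := hπ.existsUnique_adj hxy
      have hzero : ∀ q ∈ F x ×ˢ F y, q ≠ (u, v) → c q.1 q.2 = 0 := by
        intro q hq hne
        by_contra hcq
        rw [Finset.mem_product, hF, hF] at hq
        exact hne (huniq q ⟨(hadj _ _).1 hcq, hq.1, hq.2⟩)
      simp only [if_neg hxy.ne]
      rw [← Finset.sum_product', Finset.sum_eq_single_of_mem (u, v) (by simp [hF, hu, hv]) hzero]
      exact (hadj u v).2 huv
  · have htotal : ∑ y, ∑ u ∈ F x, ∑ v ∈ F y, c u v = 0 := by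
      rw [Finset.sum_comm]
      refine Finset.sum_eq_zero fun u hu => ?_
      exact (Finset.sum_fiberwise _ π (c u)).trans (hsum u (by rwa [Set.mem_preimage, hF.1 hu]))
    have hinner : ∑ u ∈ F x, ∑ v ∈ F x, c u v = 0 :=
      sum_sum_eq_zero_of_symm (F x) hsymm fun v => by_contra fun h => G.irrefl ((hadj v v).1 h)
    refine (Finset.sum_congr rfl fun y _ => ?_).trans htotal
    dsimp only
    split_ifs with hxy
    · rw [← hxy, hinner]
    · rfl

end Contraction

/-! ### Small edge cuts in Cayley graphs -/

section CayleyCut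

open scoped Pointwise

variable {Γ ι : Type*} [Group Γ] [DecidableEq Γ]

/-- The number of arcs `x → x * g` leaving `A` in the Cayley digraph of the element `g`. -/
def leaving (g : Γ) (A : Finset Γ) : ℕ := (A.filter (· * g ∉ A)).card

/-- The size of the edge cut of `A` in the Cayley graph of the family of generators `s`. -/
def cayleyCut [Fintype ι] (s : ι → Γ) (A : Finset Γ) : ℕ := ∑ i, leaving (s i) A

variable {s : ι → Γ} {A B : Finset Γ} {g : Γ}

theorem leaving_inter_add_leaving_union_le :
    leaving g (A ∩ B) + leaving g (A ∪ B) ≤ leaving g A + leaving g B := by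
  have hsum : ∀ C ⊆ A ∪ B, leaving g C = ∑ x ∈ A ∪ B, if x ∈ C ∧ x * g ∉ C then 1 else 0 := by
    intro C hC
    rw [leaving, ← Finset.card_filter]
    congr 1
    ext x
    simpa using fun hx _ => Finset.mem_union.1 (hC hx)
  rw [hsum _ Finset.inter_subset_union, hsum _ subset_rfl, hsum _ Finset.subset_union_left,
    hsum _ Finset.subset_union_right, ← Finset.sum_add_distrib, ← Finset.sum_add_distrib]
  refine Finset.sum_le_sum fun x _ => ?_
  simp only [Finset.mem_inter, Finset.mem_union]
  by_cases x ∈ A <;> by_cases x ∈ B <;> by_cases x * g ∈ A <;> by_cases x * g ∈ B <;> simp [*]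

theorem leaving_smul (h : Γ) : leaving g (h • A) = leaving g A := by
  rw [leaving, leaving, ← Finset.card_smul_finset h (A.filter _)]
  congr 1
  ext x
  simp [Finset.mem_filter, ← Finset.inv_smul_mem_iff, mul_assoc]

theorem leaving_mod_two (hg : g * g = 1) (hg₁ : g ≠ 1) : leaving g A % 2 = A.card % 2 := by
  have hstay : Even (A.filter (· * g ∈ A)).card := by
    rw [← ZMod.natCast_eq_zero_iff_even, Finset.card_eq_sum_ones, Nat.cast_sum]
    refine Finset.sum_involution (fun x _ => x * g) ?_ ?_ ?_ ?_
    · exact fun _ _ => rfl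
    · exact fun x _ _ h => hg₁ (mul_eq_left.1 h)
    · intro x hx
      simp only [Finset.mem_filter, mul_assoc, hg, mul_one] at hx ⊢
      exact hx.symm
    · intro x _
      rw [mul_assoc, hg, mul_one]
  have hcard := A.card_filter_add_card_filter_not (· * g ∈ A)
  rw [Nat.even_iff] at hstay
  rw [leaving]
  omega

theorem leaving_eq_zero_or_eq_card (hB : MulAction.IsBlock Γ (B : Set Γ)) :
    leaving g B = 0 ∨ leaving g B = B.card := by
  by_cases hstay : ∃ x ∈ B, x * g ∈ B
  · obtain ⟨x, hx, hxg⟩ := hstay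
    refine Or.inl (Finset.card_eq_zero.2 (Finset.filter_eq_empty_iff.2 fun y hy => not_not.2 ?_))
    have hfix := hB.smul_eq_of_mem (g := y * x⁻¹) (a := x) hx (by simpa using hy)
    have : y * g ∈ (y * x⁻¹) • (B : Set Γ) := ⟨x * g, hxg, by simp [mul_assoc]⟩
    rwa [hfix] at this
  · push Not at hstay
    exact Or.inr (congrArg Finset.card (Finset.filter_true_of_mem hstay))

theorem leaving_compl [Fintype Γ] : leaving g Aᶜ = leaving g A := by
  have hshift : (Finset.univ.filter (· * g ∈ A)).card = A.card :=
    Finset.card_bijective (· * g) (Group.mulRight_bijective g) (by simp)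
  have hA := A.card_filter_add_card_filter_not (· * g ∈ A)
  have hpre := (Finset.univ.filter (· * g ∈ A)).card_filter_add_card_filter_not (· ∈ A)
  rw [hshift, Finset.filter_filter, Finset.filter_filter] at hpre
  have hinter : A.filter (· * g ∈ A) = Finset.univ.filter fun x => x * g ∈ A ∧ x ∈ A := by
    ext; simp [and_comm]
  have hcompl : Aᶜ.filter (· * g ∉ Aᶜ) = Finset.univ.filter fun x => x * g ∈ A ∧ x ∉ A := by
    ext; simp [and_comm]
  rw [hinter] at hA
  rw [leaving, leaving, hcompl]
  omega

variable [Fintype ι]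

theorem cayleyCut_smul (h : Γ) : cayleyCut s (h • A) = cayleyCut s A :=
  Finset.sum_congr rfl fun _ _ => leaving_smul h

theorem cayleyCut_le_ncard [Finite Γ] (hs : Function.Injective s) :
    cayleyCut s A ≤ {q : Γ × Γ | q.1 ∈ A ∧ q.2 ∉ A ∧ ∃ i, q.2 = q.1 * s i}.ncard := by
  simp only [cayleyCut, leaving]
  rw [← Finset.card_sigma, ← Set.ncard_coe_finset]
  refine Set.ncard_le_ncard_of_injOn (fun q => (q.2, q.2 * s q.1)) ?_ ?_
  · rintro ⟨i, x⟩ hq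
    obtain ⟨-, hx⟩ := Finset.mem_sigma.1 hq
    exact ⟨(Finset.mem_filter.1 hx).1, (Finset.mem_filter.1 hx).2, i, rfl⟩
  · rintro ⟨i, x⟩ - ⟨j, x'⟩ - h
    simp only [Prod.mk.injEq] at h
    obtain ⟨rfl, h⟩ := h
    rw [hs (mul_left_cancel h)]

theorem cayleyCut_inter_add_cayleyCut_union_le :
    cayleyCut s (A ∩ B) + cayleyCut s (A ∪ B) ≤ cayleyCut s A + cayleyCut s B := by
  simp only [cayleyCut, ← Finset.sum_add_distrib]
  exact Finset.sum_le_sum fun _ _ => leaving_inter_add_leaving_union_le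

variable [Fintype Γ]

theorem cayleyCut_compl : cayleyCut s Aᶜ = cayleyCut s A :=
  Finset.sum_congr rfl fun _ _ => leaving_compl

omit [Fintype Γ] in
theorem cayleyCut_sdiff_add_cayleyCut_sdiff_le [Finite Γ] :
    cayleyCut s (A \ B) + cayleyCut s (B \ A) ≤ cayleyCut s A + cayleyCut s B := by
  have := Fintype.ofFinite Γ
  have hBA : B \ A = (A ∪ Bᶜ)ᶜ := by ext x; simp [and_comm]
  rw [hBA, cayleyCut_compl, Finset.sdiff_eq_inter_compl, ← cayleyCut_compl (A := B)]
  exact cayleyCut_inter_add_cayleyCut_union_le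

theorem eq_univ_of_cayleyCut_eq_zero (hgen : Subgroup.closure (Set.range s) = ⊤)
    (hA : A.Nonempty) (hcut : cayleyCut s A = 0) : A = Finset.univ := by
  have hclosed : ∀ i, ∀ y ∈ A, y * s i ∈ A := by
    intro i y hy
    have hzero := Finset.sum_eq_zero_iff.1 hcut i (Finset.mem_univ i)
    exact not_not.1 (Finset.filter_eq_empty_iff.1 (Finset.card_eq_zero.1 hzero) hy)
  have hsurj : ∀ i, ∀ y ∈ A, y * (s i)⁻¹ ∈ A := by
    intro i y hy
    obtain ⟨z, hz, rfl⟩ := Finset.surj_on_of_inj_on_of_card_le (fun z _ => z * s i) (hclosed i)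
      (fun _ _ _ _ => mul_right_cancel) le_rfl y hy
    simpa using hz
  have hmul : ∀ x ∈ A, ∀ a ∈ Subgroup.closure (Set.range s), x * a ∈ A := by
    intro x hx a ha
    induction ha using Subgroup.closure_induction_right with
    | one => rwa [mul_one]
    | mul_right _ _ _ hb ih =>
      obtain ⟨i, rfl⟩ := hb
      rw [← mul_assoc]
      exact hclosed i _ ih
    | mul_inv_cancel _ _ _ hb ih =>
      obtain ⟨i, rfl⟩ := hb
      rw [← mul_assoc]
      exact hsurj i _ ih
  obtain ⟨x, hx⟩ := hA
  refine Finset.eq_univ_of_forall fun y => ?_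
  simpa using hmul x hx (x⁻¹ * y) (hgen ▸ Subgroup.mem_top _)

omit [Fintype Γ] in
theorem exists_smul_overlap (hB : ¬ MulAction.IsBlock Γ (B : Set Γ)) :
    ∃ g : Γ, (B ∩ g • B).Nonempty ∧ (B \ g • B).Nonempty ∧ (B \ g • B).card = (g • B \ B).card := by
  obtain ⟨g, hne, hmeet⟩ : ∃ g : Γ, g • (B : Set Γ) ≠ B ∧ ¬ Disjoint (g • (B : Set Γ)) B := by
    simpa [MulAction.isBlock_iff_smul_eq_or_disjoint] using hB
  rw [← Finset.coe_smul_finset, Finset.disjoint_coe, disjoint_comm,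
    Finset.not_disjoint_iff_nonempty_inter] at hmeet
  rw [← Finset.coe_smul_finset, Ne, Finset.coe_inj] at hne
  refine ⟨g, hmeet, Finset.sdiff_nonempty.2 fun hsub => hne ?_,
    Finset.card_sdiff_comm (Finset.card_smul_finset g B).symm⟩
  exact (Finset.eq_of_subset_of_card_le hsub (Finset.card_smul_finset g B).le).symm

/-- For a block `B`, each generator contributes `0` or `#B` to the cut, and the generators of the
first kind map a fixed point of `B` to distinct other points of `B`. -/
theorem card_le_cayleyCut_of_isBlock (hgen : Subgroup.closure (Set.range s) = ⊤)
    (hs : Function.Injective s) (hs₁ : ∀ i, s i ≠ 1) (hB : MulAction.IsBlock Γ (B : Set Γ))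
    (hne : B.Nonempty) (huniv : B ≠ Finset.univ) : Fintype.card ι ≤ cayleyCut s B := by
  classical
  obtain ⟨x, hx⟩ := hne
  set I := Finset.univ.filter fun i => leaving (s i) B = 0 with hI
  have hstay : I.card ≤ (B.erase x).card := by
    refine Finset.card_le_card_of_injOn (x * s ·) (fun i hi => ?_)
      fun i _ j _ h => hs (mul_left_cancel h)
    have hzero := Finset.filter_eq_empty_iff.1 (Finset.card_eq_zero.1 (Finset.mem_filter.1 hi).2) hx
    exact Finset.mem_erase.2 ⟨fun h => hs₁ i (mul_eq_left.1 h), not_not.1 hzero⟩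
  have hcut : cayleyCut s B = Iᶜ.card * B.card := by
    rw [cayleyCut, ← Finset.sum_add_sum_compl I,
      Finset.sum_eq_zero fun i hi => (Finset.mem_filter.1 hi).2, zero_add]
    refine Finset.sum_const_nat fun i hi => (leaving_eq_zero_or_eq_card hB).resolve_left ?_
    simpa [hI] using hi
  have hpos : 0 < Iᶜ.card := by
    refine Nat.pos_of_ne_zero fun h => huniv (eq_univ_of_cayleyCut_eq_zero hgen ⟨x, hx⟩ ?_)
    rw [hcut, h, zero_mul]
  have hcard := I.card_add_card_compl
  rw [Finset.card_erase_of_mem hx] at hstay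
  have := Finset.card_pos.2 ⟨x, hx⟩
  calc Fintype.card ι = I.card + Iᶜ.card := hcard.symm
    _ ≤ Iᶜ.card * I.card + Iᶜ.card := Nat.add_le_add_right (Nat.le_mul_of_pos_left _ hpos) _
    _ = Iᶜ.card * (I.card + 1) := (Nat.mul_succ _ _).symm
    _ ≤ Iᶜ.card * B.card := Nat.mul_le_mul_left _ (by omega)
    _ = cayleyCut s B := hcut.symm

theorem card_le_cayleyCut (hgen : Subgroup.closure (Set.range s) = ⊤) (hs : Function.Injective s)
    (hs₁ : ∀ i, s i ≠ 1) (hne : A.Nonempty) (huniv : A ≠ Finset.univ) :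
    Fintype.card ι ≤ cayleyCut s A := by
  induction hn : A.card using Nat.strong_induction_on generalizing A with
  | _ n ih =>
    by_cases hA : MulAction.IsBlock Γ (A : Set Γ)
    · exact card_le_cayleyCut_of_isBlock hgen hs hs₁ hA hne huniv
    obtain ⟨g, hmeet, hdiff, hcard⟩ := exists_smul_overlap hA
    have hsplit := Finset.card_sdiff_add_card_inter A (g • A)
    have hpos := hmeet.card_pos
    have hpos' := hdiff.card_pos
    have huncross := cayleyCut_sdiff_add_cayleyCut_sdiff_le (s := s) (A := A) (B := g • A)
    rw [cayleyCut_smul] at huncross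
    have hproper : ∀ C D : Finset Γ, D.Nonempty → C \ D ≠ Finset.univ := fun C D ⟨x, hx⟩ h =>
      (Finset.mem_sdiff.1 (h ▸ Finset.mem_univ x)).2 hx
    have h₁ := ih _ (by omega) hdiff (hproper _ _ hne.smul_finset) rfl
    have h₂ := ih (g • A \ A).card (by omega) (Finset.card_pos.1 (by omega)) (hproper _ _ hne) rfl
    omega

omit [Fintype Γ] in
theorem cayleyCut_mod_two (hs : ∀ i, s i * s i = 1) (hs₁ : ∀ i, s i ≠ 1) :
    cayleyCut s A % 2 = Fintype.card ι * A.card % 2 := by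
  rw [cayleyCut, Finset.sum_nat_mod, Finset.sum_congr rfl fun i _ => leaving_mod_two (hs i) (hs₁ i),
    ← Finset.sum_nat_mod, Finset.sum_const, Finset.card_univ, smul_eq_mul]

theorem four_le_cayleyCut_of_card_sdiff_smul_eq_one {s : Fin 3 → Γ}
    (hgen : Subgroup.closure (Set.range s) = ⊤) (hs : Function.Injective s) (hs₁ : ∀ i, s i ≠ 1)
    (hs₂ : ∀ i, s i * s i = 1) (hA : 1 < A.card) (hA' : 1 < Aᶜ.card)
    (hdiff : (A \ g • A).card = 1) : 4 ≤ cayleyCut s A := by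
  have hpar : ∀ C : Finset Γ, cayleyCut s C % 2 = 3 * C.card % 2 := fun C =>
    cayleyCut_mod_two hs₂ hs₁
  have hthree : ∀ C : Finset Γ, C.Nonempty → C ≠ Finset.univ → 3 ≤ cayleyCut s C := fun C =>
    card_le_cayleyCut hgen hs hs₁
  have hcard := A.card_add_card_compl
  have hsplit := Finset.card_sdiff_add_card_inter A (g • A)
  have hunion := Finset.card_inter_add_card_union A (g • A)
  rw [Finset.card_smul_finset] at hunion
  have hcut := hthree A (Finset.card_pos.1 (by omega)) fun h => by simp [h] at hA'
  have hcut_inter := hthree (A ∩ g • A) (Finset.card_pos.1 (by omega)) fun h => by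
    rw [h, Finset.card_univ] at hsplit
    omega
  have hcut_union := hthree (A ∪ g • A) (Finset.card_pos.1 (by omega)) fun h => by
    rw [h, Finset.card_univ] at hunion
    omega
  have hsubmod := cayleyCut_inter_add_cayleyCut_union_le (s := s) (A := A) (B := g • A)
  rw [cayleyCut_smul] at hsubmod
  have := hpar A
  have := hpar (A ∩ g • A)
  omega

/-- A set with a minimal cut of size three would have odd size, so it is not a block; uncrossing it
with an overlapping translate leaves one vertex on either side. -/
theorem four_le_cayleyCut {s : Fin 3 → Γ} (hgen : Subgroup.closure (Set.range s) = ⊤)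
    (hs : Function.Injective s) (hs₁ : ∀ i, s i ≠ 1) (hs₂ : ∀ i, s i * s i = 1)
    (hA : 1 < A.card) (hA' : 1 < Aᶜ.card) : 4 ≤ cayleyCut s A := by
  induction hn : A.card using Nat.strong_induction_on generalizing A with
  | _ n ih =>
    by_contra! hcut
    have hcut₃ : 3 ≤ cayleyCut s A := card_le_cayleyCut hgen hs hs₁ (Finset.card_pos.1 (by omega))
      fun h => by simp [h] at hA'
    have hodd : cayleyCut s A % 2 = 3 * A.card % 2 := cayleyCut_mod_two hs₂ hs₁
    by_cases hblock : MulAction.IsBlock Γ (A : Set Γ)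
    · have hleave : ∀ i, leaving (s i) A = A.card := fun i =>
        (leaving_eq_zero_or_eq_card hblock).resolve_left fun h => by
          have := leaving_mod_two (A := A) (hs₂ i) (hs₁ i)
          omega
      simp only [cayleyCut, hleave, Fin.sum_const, smul_eq_mul] at hcut
      omega
    obtain ⟨g, hmeet, hdiff, hcard⟩ := exists_smul_overlap hblock
    have hsplit := Finset.card_sdiff_add_card_inter A (g • A)
    have hpos := hmeet.card_pos
    have hdiff_one : (A \ g • A).card ≠ 1 := fun h => hcut.not_ge
      (four_le_cayleyCut_of_card_sdiff_smul_eq_one hgen hs hs₁ hs₂ hA hA' h)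
    have hpos' := hdiff.card_pos
    have hcompl := A.card_add_card_compl
    have hcompl₁ := (A \ g • A).card_add_card_compl
    have hcompl₂ := (g • A \ A).card_add_card_compl
    have h₁ := ih _ (by omega) (A := A \ g • A) (by omega) (by omega) rfl
    have h₂ := ih _ (by omega) (A := g • A \ A) (by omega) (by omega) rfl
    have huncross := cayleyCut_sdiff_add_cayleyCut_sdiff_le (s := s) (A := A) (B := g • A)
    rw [cayleyCut_smul] at huncross
    omega

end CayleyCut

/-! ### Groups generated by involutions without short relations -/

section Words

variable {ι : Type*} [DecidableEq ι] {L : ℕ} {i : ι} {l : List ι}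

/-- The words of length at most `L` in the alphabet `ι` without two equal consecutive letters. -/
def reducedWords (ι : Type*) (L : ℕ) : Set (List ι) := {l | l.IsChain (· ≠ ·) ∧ l.length ≤ L}

/-- Left multiplication of a reduced word by an involution `i`, truncated at length `L`. -/
def toggle (L : ℕ) (i : ι) (l : List ι) : List ι :=
  if l.head? = some i then l.tail else if l.length < L then i :: l else l

theorem toggle_of_isChain_cons (h : (i :: l).IsChain (· ≠ ·)) (hL : l.length < L) :
    toggle L i l = i :: l := by
  have hhead : l.head? ≠ some i := fun h' => (List.isChain_cons.1 h).1 i h' rfl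
  rw [toggle, if_neg hhead, if_pos hL]

theorem toggle_mem_reducedWords (hl : l ∈ reducedWords ι L) : toggle L i l ∈ reducedWords ι L := by
  rw [toggle]
  split_ifs with hhead hlen
  · exact ⟨hl.1.tail, by rw [List.length_tail]; exact (Nat.sub_le _ _).trans hl.2⟩
  · exact ⟨List.isChain_cons.2 ⟨fun j hj h => hhead (h ▸ hj), hl.1⟩, hlen⟩
  · exact hl

theorem toggle_toggle (hl : l ∈ reducedWords ι L) : toggle L i (toggle L i l) = l := by
  by_cases hhead : l.head? = some i
  · obtain ⟨t, rfl⟩ := List.head?_eq_some_iff.1 hhead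
    simpa [toggle] using toggle_of_isChain_cons hl.1 hl.2
  · by_cases hlen : l.length < L <;> simp [toggle, hhead, hlen]

/-- The involution `toggle L i` of the reduced words of length at most `L`. -/
def togglePerm (L : ℕ) (i : ι) : Equiv.Perm (reducedWords ι L) :=
  Function.Involutive.toPerm (fun l => ⟨toggle L i l, toggle_mem_reducedWords l.2⟩)
    fun l => Subtype.ext (toggle_toggle l.2)

theorem prod_togglePerm_apply_nil (hl : l ∈ reducedWords ι L) :
    ((l.map (togglePerm L)).prod ⟨[], List.isChain_nil, Nat.zero_le L⟩ : List ι) = l := by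
  induction l with
  | nil => rfl
  | cons i l ih =>
    rw [List.map_cons, List.prod_cons, Equiv.Perm.mul_apply]
    exact (congrArg (toggle L i) (ih ⟨hl.1.tail, (Nat.le_succ _).trans hl.2⟩)).trans
      (toggle_of_isChain_cons hl.1 hl.2)

omit [DecidableEq ι] in
theorem exists_involutions_without_short_relations (ι : Type) [Finite ι] (L : ℕ) :
    ∃ (Γ : Type) (_ : Group Γ) (_ : Finite Γ) (s : ι → Γ), (∀ i, s i * s i = 1) ∧
      Subgroup.closure (Set.range s) = ⊤ ∧
      Set.InjOn (fun l : List ι => (l.map s).prod) (reducedWords ι L) := by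
  classical
  have : Finite (reducedWords ι L) :=
    ((List.finite_length_le ι L).subset fun l hl => hl.2).to_subtype
  let H := Subgroup.closure (Set.range (togglePerm (ι := ι) L))
  let s : ι → H := fun i => ⟨togglePerm L i, Subgroup.subset_closure ⟨i, rfl⟩⟩
  refine ⟨H, inferInstance, inferInstance, s, fun i => ?_, ?_, fun l hl l' hl' h => ?_⟩
  · exact Subtype.ext (Equiv.ext fun l => Subtype.ext (toggle_toggle l.2))
  · rw [← Subgroup.closure_closure_coe_preimage]
    congr 1
    ext x
    simp [s, Subtype.ext_iff]
  · have hcoe : ∀ l : List ι, ((l.map s).prod : H) = (l.map (togglePerm L)).prod := fun l => by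
      rw [Subgroup.val_list_prod, List.map_map]
      rfl
    rw [← prod_togglePerm_apply_nil hl, ← hcoe, show (l.map s).prod = (l'.map s).prod from h, hcoe,
      prod_togglePerm_apply_nil hl']

variable {Γ : Type*} [Group Γ] {s : ι → Γ}

omit [DecidableEq ι] in
theorem exists_reducedWords_prod_eq (hs : ∀ i, s i * s i = 1) (l : List ι) :
    ∃ l' ∈ reducedWords ι l.length, (l'.map s).prod = (l.map s).prod := by
  classical
  induction l with
  | nil => exact ⟨[], ⟨List.isChain_nil, le_rfl⟩, rfl⟩
  | cons i l ih =>
    obtain ⟨l', hl', hprod⟩ := ih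
    refine ⟨toggle (l.length + 1) i l',
      toggle_mem_reducedWords ⟨hl'.1, hl'.2.trans (Nat.le_succ _)⟩, ?_⟩
    rw [toggle, if_pos (Nat.lt_succ_of_le hl'.2), List.map_cons, List.prod_cons, ← hprod]
    split_ifs with hhead
    · obtain ⟨t, rfl⟩ := List.head?_eq_some_iff.1 hhead
      rw [List.map_cons, List.prod_cons, ← mul_assoc, hs, one_mul, List.tail_cons]
    · rw [List.map_cons, List.prod_cons]

omit [DecidableEq ι] in
theorem prod_map_reverse_eq_inv (hs : ∀ i, s i * s i = 1) (l : List ι) :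
    (l.reverse.map s).prod = (l.map s).prod⁻¹ := by
  rw [List.prod_inv_reverse, List.map_map, ← List.map_reverse]
  exact congrArg List.prod (List.map_congr_left fun i _ => (inv_eq_of_mul_eq_one_left (hs i)).symm)

omit [DecidableEq ι] in
theorem exists_reducedWords_prod_eq_pow {i j : ι} (hij : i ≠ j) (m : ℕ) :
    ∃ l : List ι, l.IsChain (· ≠ ·) ∧ l.length = 2 * m ∧ (l.map s).prod = (s i * s j) ^ m := by
  suffices ∃ l : List ι, (j :: l).IsChain (· ≠ ·) ∧ l.length = 2 * m ∧
      (l.map s).prod = (s i * s j) ^ m from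
    let ⟨l, hl, h⟩ := this
    ⟨l, hl.tail, h⟩
  induction m with
  | zero => exact ⟨[], List.isChain_singleton _, rfl, (pow_zero _).symm⟩
  | succ m ih =>
    obtain ⟨l, hl, hlen, hprod⟩ := ih
    refine ⟨i :: j :: l, ?_, by simp [hlen, Nat.mul_succ], by simp [hprod, pow_succ', mul_assoc]⟩
    exact List.isChain_cons_cons.2 ⟨hij.symm, List.isChain_cons_cons.2 ⟨hij, hl⟩⟩

/-- A group generated by three involutions whose Cayley graph has girth greater than `2 * R + 2`,
with points `p d` marked in it that are pairwise at distance greater than `R`. -/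
structure Host (D : Type*) (R : ℕ) (Γ : Type*) [Group Γ] where
  s : Fin 3 → Γ
  p : D → Γ
  mul_self : ∀ i, s i * s i = 1
  closure_range : Subgroup.closure (Set.range s) = ⊤
  injOn : Set.InjOn (fun l : List (Fin 3) => (l.map s).prod) (reducedWords (Fin 3) (R + 1))
  far : ∀ d d' (l : List (Fin 3)), l.length ≤ R → p d * (l.map s).prod = p d' → d = d'

theorem exists_host (D : Type*) [Finite D] (R : ℕ) :
    ∃ (Γ : Type) (_ : Group Γ) (_ : Finite Γ), Nonempty (Host D R Γ) := by
  obtain ⟨n, ⟨k⟩⟩ : ∃ n, Nonempty (D ≃ Fin n) := Finite.exists_equiv_fin D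
  obtain ⟨Γ, _, _, s, hs, hgen, hinj⟩ :=
    exists_involutions_without_short_relations (Fin 3) (2 * (R + 1) * (n + 1))
  refine ⟨Γ, inferInstance, inferInstance, ⟨⟨s, fun d => (s 1 * s 2) ^ ((R + 1) * k d), hs, hgen,
    ?_, fun d d' l hl h => ?_⟩⟩⟩
  · have hsub : reducedWords (Fin 3) (R + 1) ⊆ reducedWords (Fin 3) (2 * (R + 1) * (n + 1)) :=
      fun l hl => ⟨hl.1, hl.2.trans (by nlinarith)⟩
    exact hinj.mono hsub
  wlog hlt : (k d : ℕ) < k d' generalizing d d' l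
  · rcases (not_lt.1 hlt).eq_or_lt with heq | hgt
    · exact (k.injective (Fin.ext heq)).symm
    · refine (this d' d l.reverse (by rwa [List.length_reverse]) ?_ hgt).symm
      rw [prod_map_reverse_eq_inv hs, ← h, mul_inv_cancel_right]
  obtain ⟨m, hm⟩ := Nat.exists_eq_add_of_lt hlt
  rw [hm, add_assoc, mul_add, pow_add] at h
  obtain ⟨l₁, hl₁, hprod₁⟩ := exists_reducedWords_prod_eq hs l
  obtain ⟨l₂, hl₂, hlen₂, hprod₂⟩ :=
    exists_reducedWords_prod_eq_pow (s := s) (i := 1) (j := 2) (by decide) ((R + 1) * (m + 1))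
  have hmn : m + 1 ≤ n := by have := (k d').is_lt; omega
  have heq : l₁ = l₂ := hinj ⟨hl₁.1, by nlinarith [hl₁.2]⟩ ⟨hl₂, by nlinarith⟩
    ((hprod₁.trans (mul_left_cancel h)).trans hprod₂.symm)
  rw [heq] at hl₁
  nlinarith [hl₁.2]

namespace Host

variable {D : Type*} {R : ℕ} (H : Host D R Γ)

theorem mul_s_mul_s (γ : Γ) (i : Fin 3) : γ * H.s i * H.s i = γ := by
  rw [mul_assoc, H.mul_self, mul_one]

theorem eq_singleton_of_prod_eq {l : List (Fin 3)} {i : Fin 3}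
    (hl : l ∈ reducedWords (Fin 3) (R + 1)) (h : (l.map H.s).prod = H.s i) : l = [i] :=
  H.injOn hl ⟨List.isChain_singleton i, Nat.le_add_left 1 R⟩ (by simpa using h)

theorem eq_nil_of_prod_eq {l : List (Fin 3)} (hl : l ∈ reducedWords (Fin 3) (R + 1))
    (h : (l.map H.s).prod = 1) : l = [] :=
  H.injOn hl ⟨List.isChain_nil, Nat.zero_le _⟩ h

theorem s_ne_one (i : Fin 3) : H.s i ≠ 1 := fun h =>
  List.cons_ne_nil i [] (H.eq_singleton_of_prod_eq (l := []) ⟨List.isChain_nil, Nat.zero_le _⟩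
    h.symm).symm

theorem s_injective : Function.Injective H.s := fun i j h =>
  List.head_eq_of_cons_eq (H.eq_singleton_of_prod_eq
    ⟨List.isChain_singleton i, Nat.le_add_left 1 R⟩ (by simpa using h))

theorem mul_s_ne_self (γ : Γ) (i : Fin 3) : γ * H.s i ≠ γ := fun h =>
  H.s_ne_one i (mul_eq_left.1 h)

end Host

end Words

/-! ### Expanding the supervertices of a template -/

section Template

variable {A Y : Type*}

/-- A graph on vertices `A` and supervertices `Y` from which a snark can be built by expanding every
supervertex into a part of large girth. The last condition says that an edge cut separating two
supervertices has at least four edges. -/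
structure IsTemplate (T : SimpleGraph (A ⊕ Y)) : Prop where
  not_adj_inr : ∀ y y', ¬ T.Adj (.inr y) (.inr y')
  ncard_neighborSet : ∀ a, (T.neighborSet (.inl a)).ncard = 3
  isAcyclic : (T.comap Sum.inl).IsAcyclic
  four_le_ncard_crossing : ∀ (S : Set (A ⊕ Y)) y y', .inr y ∈ S → .inr y' ∉ S →
    4 ≤ (crossing T S).ncard

/-- The edges joining a vertex to a supervertex. -/
abbrev Link (T : SimpleGraph (A ⊕ Y)) : Type _ := {e : A × Y // T.Adj (.inl e.1) (.inr e.2)}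

/-- The vertices of the graph obtained from `T` by expanding every supervertex `y` into a copy of
the Cayley graph on `Γ`: the vertices of `T`, the elements of the copies of `Γ`, and one vertex
`port e` subdividing both the link `e` and an edge of a Cayley graph. -/
inductive Expansion (T : SimpleGraph (A ⊕ Y)) (Γ : Type*)
  | node (a : A)
  | port (e : Link T)
  | core (y : Y) (γ : Γ)

namespace Expansion

variable {T : SimpleGraph (A ⊕ Y)} {Γ : Type*}

instance [Finite A] [Finite Y] [Finite Γ] : Finite (Expansion T Γ) :=
  Finite.of_injective (β := A ⊕ Link T ⊕ Y × Γ)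
    (fun
      | node a => .inl a
      | port e => .inr (.inl e)
      | core y γ => .inr (.inr (y, γ)))
    (by rintro (_ | _ | _) (_ | _ | _) <;> simp)

/-- The projection onto the template. -/
def proj : Expansion T Γ → A ⊕ Y
  | node a => .inl a
  | port e => .inr e.1.2
  | core y _ => .inr y

variable [Group Γ] {R : ℕ} {H : Host (Link T) R Γ}

/-- The port `e` subdivides an edge of the core of `y` with end `γ`. -/
def Marks (H : Host (Link T) R Γ) (e : Link T) (y : Y) (γ : Γ) : Prop :=
  e.1.2 = y ∧ (γ = H.p e ∨ γ = H.p e * H.s 0)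

variable {e e' : Link T} {y y' : Y} {γ : Γ} {l : List (Fin 3)}

theorem Marks.mul_s_zero (h : Marks H e y γ) : Marks H e y (γ * H.s 0) := by
  obtain ⟨rfl, rfl | rfl⟩ := h
  · exact ⟨rfl, .inr rfl⟩
  · exact ⟨rfl, .inl (H.mul_s_mul_s _ _)⟩

theorem marks_mul_s_zero_iff : Marks H e y (γ * H.s 0) ↔ Marks H e y γ :=
  ⟨fun h => H.mul_s_mul_s γ 0 ▸ h.mul_s_zero, Marks.mul_s_zero⟩

theorem Marks.eq_of_mul_prod (h : Marks H e y γ) (h' : Marks H e' y' (γ * (l.map H.s).prod))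
    (hl : l.length + 2 ≤ R) : e = e' := by
  obtain ⟨l₁, hl₁, rfl⟩ : ∃ l₁ : List (Fin 3), l₁.length ≤ 1 ∧ γ = H.p e * (l₁.map H.s).prod := by
    rcases h.2 with h | h
    exacts [⟨[], by simp, by simpa using h⟩, ⟨[0], by simp, by simpa using h⟩]
  obtain ⟨l₂, hl₂, hprod⟩ : ∃ l₂ : List (Fin 3), l₂.length ≤ 1 ∧
      H.p e * (l₁.map H.s).prod * (l.map H.s).prod * (l₂.map H.s).prod = H.p e' := by
    rcases h'.2 with h' | h'
    exacts [⟨[], by simp, by simpa using h'⟩, ⟨[0], by simp, by simp [h', H.mul_s_mul_s]⟩]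
  refine H.far e e' (l₁ ++ l ++ l₂) ?_ (by simpa [mul_assoc] using hprod)
  simp only [List.length_append]
  omega

theorem Marks.eq (hR : 2 ≤ R) (h : Marks H e y γ) (h' : Marks H e' y' γ) : e = e' :=
  h.eq_of_mul_prod (l := []) (by simpa using h') hR

/-- Adjacency in the expansion. Both edges at an element `γ` marked by a port `e` in direction
`s 0` are replaced by the edges to that port. -/
def Adj (H : Host (Link T) R Γ) : Expansion T Γ → Expansion T Γ → Prop
  | node a, node b => T.Adj (.inl a) (.inl b)
  | node a, port e => e.1.1 = a
  | port e, node a => e.1.1 = a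
  | port e, core y γ => Marks H e y γ
  | core y γ, port e => Marks H e y γ
  | core y γ, core z δ => y = z ∧ ∃ i, δ = γ * H.s i ∧ (i = 0 → ∀ e, ¬ Marks H e y γ)
  | _, _ => False

/-- The expansion of the template `T` by the host `H`. -/
def graph (H : Host (Link T) R Γ) : SimpleGraph (Expansion T Γ) where
  Adj := Adj H
  symm := ⟨by
    rintro (_ | _ | _) (_ | _ | _) h
    case node.node => exact SimpleGraph.Adj.symm h
    case core.core y γ z δ =>
      obtain ⟨rfl, i, rfl, hi⟩ := h
      refine ⟨rfl, i, (H.mul_s_mul_s γ i).symm, ?_⟩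
      rintro rfl e he
      exact hi rfl e (marks_mul_s_zero_iff.1 he)
    all_goals exact h⟩
  loopless := ⟨by
    rintro (a | e | ⟨y, γ⟩) h
    · exact T.irrefl h
    · exact h
    · obtain ⟨-, i, hi, -⟩ := h
      exact H.mul_s_ne_self γ i hi.symm⟩

variable (H) in
theorem neighborSet_port (e : Link T) : (graph H).neighborSet (port e) =
    {node e.1.1, core e.1.2 (H.p e), core e.1.2 (H.p e * H.s 0)} := by
  ext (a | _ | ⟨y, γ⟩)
  · simp [graph, Adj, eq_comm]
  · simp [graph, Adj]
  · simp [graph, Adj, Marks, and_or_left, eq_comm]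

theorem Marks.neighborSet_core (hR : 2 ≤ R) (he : Marks H e y γ) :
    (graph H).neighborSet (core y γ) = {port e, core y (γ * H.s 1), core y (γ * H.s 2)} := by
  ext (_ | e' | ⟨z, δ⟩)
  · simp [graph, Adj]
  · simpa [graph, Adj] using ⟨fun he' => he'.eq hR he, fun h => h ▸ he⟩
  · have hmarked : ¬ ∀ e, ¬ Marks H e y γ := fun h => h e he
    simp [-Subtype.forall, graph, Adj, hmarked, Fin.exists_fin_succ, and_or_left, eq_comm]

theorem neighborSet_core (h : ∀ e, ¬ Marks H e y γ) : (graph H).neighborSet (core y γ) =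
    {core y (γ * H.s 0), core y (γ * H.s 1), core y (γ * H.s 2)} := by
  ext (_ | _ | ⟨z, δ⟩)
  · simp [graph, Adj]
  · simp [graph, Adj, h]
  · simp [graph, Adj, h, Fin.exists_fin_succ, and_or_left, eq_comm]

theorem image_proj_neighborSet_node (a : A) :
    proj '' (graph H).neighborSet (node a) = T.neighborSet (.inl a) := by
  ext (b | y)
  · refine ⟨?_, fun h => ⟨node b, h, rfl⟩⟩
    rintro ⟨_ | _ | _, h, heq⟩
    · exact heq ▸ h
    all_goals cases heq
  · refine ⟨?_, fun h => ⟨port ⟨(a, y), h⟩, rfl, rfl⟩⟩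
    rintro ⟨_ | ⟨_, he⟩ | _, h, heq⟩
    · cases heq
    · obtain rfl := h
      exact heq ▸ he
    · exact h.elim

theorem injOn_proj_neighborSet_node (a : A) :
    Set.InjOn proj ((graph H).neighborSet (node a)) := by
  rintro (_ | ⟨⟨_, _⟩, _⟩ | _) h (_ | ⟨⟨_, _⟩, _⟩ | _) h' heq <;>
    first | exact h.elim | exact h'.elim | simp_all [proj, graph, Adj]

theorem isCubic_graph (hT : IsTemplate T) (hR : 2 ≤ R) : IsCubic (graph H) := by
  rintro (a | e | ⟨y, γ⟩)
  · rw [← (injOn_proj_neighborSet_node a).ncard_image, image_proj_neighborSet_node,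
      hT.ncard_neighborSet]
  · rw [neighborSet_port, Set.ncard_eq_three]
    exact ⟨_, _, _, by simp, by simp, by simpa using H.s_ne_one 0, rfl⟩
  · have hne : ∀ {i j}, i ≠ j → core (T := T) y (γ * H.s i) ≠ core y (γ * H.s j) := fun hij h =>
      hij (H.s_injective (mul_left_cancel (core.inj h).2))
    rw [Set.ncard_eq_three]
    by_cases hmarks : ∃ e, Marks H e y γ
    · obtain ⟨e, he⟩ := hmarks
      exact ⟨_, _, _, by simp, by simp, hne (by decide), he.neighborSet_core hR⟩
    · exact ⟨_, _, _, hne (by decide), hne (by decide), hne (by decide),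
        neighborSet_core (not_exists.1 hmarks)⟩

theorem isContraction_proj (hT : IsTemplate T) : IsContraction (graph H) T proj where
  adj_of_adj := by
    rintro (_ | ⟨_, he⟩ | _) (_ | ⟨_, he'⟩ | _) h hne
    case node.node => exact h
    case node.port => exact h ▸ he'
    case port.node => exact h ▸ he.symm
    case port.core => exact absurd (congrArg Sum.inr h.1) hne
    case core.port => exact absurd (congrArg Sum.inr h.1.symm) hne
    case core.core => exact absurd (congrArg Sum.inr h.1) hne
    all_goals exact h.elim
  existsUnique_adj := by
    rintro (a | y) (b | z) h
    · refine ⟨(node a, node b), ⟨h, rfl, rfl⟩, ?_⟩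
      rintro ⟨_ | _ | _, _ | _ | _⟩ ⟨-, h, h'⟩ <;> simp_all [proj]
    · refine ⟨(node a, port ⟨(a, z), h⟩), ⟨rfl, rfl, rfl⟩, ?_⟩
      rintro ⟨_ | _ | _, _ | ⟨⟨_, _⟩, _⟩ | _⟩ ⟨hadj, h, h'⟩ <;> simp_all [proj, graph, Adj]
    · refine ⟨(port ⟨(b, y), h.symm⟩, node b), ⟨rfl, rfl, rfl⟩, ?_⟩
      rintro ⟨_ | ⟨⟨_, _⟩, _⟩ | _, _ | _ | _⟩ ⟨hadj, h, h'⟩ <;> simp_all [proj, graph, Adj]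
    · exact absurd h (hT.not_adj_inr y z)

theorem adj_core_iff {v : Expansion T Γ} : (graph H).Adj (core y γ) v ↔
    (∃ e, v = port e ∧ Marks H e y γ) ∨
      ∃ i, v = core y (γ * H.s i) ∧ (i = 0 → ∀ e, ¬ Marks H e y γ) := by
  rcases v with _ | e | ⟨z, δ⟩
  · simp [graph, Adj]
  · simp [graph, Adj]
  · simp [-Subtype.forall, graph, Adj, and_assoc, eq_comm]

/-- A path starting in a core spells a reduced word until it ends or reaches a port. -/
theorem exists_word_of_isPath {u v : Expansion T Γ} {p : (graph H).Walk u v} (hp : p.IsPath)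
    (hu : u = core y γ) : ∃ l : List (Fin 3), l.IsChain (· ≠ ·) ∧
      (∀ i ∈ l.head?, core y (γ * H.s i) ∈ p.support ∧ (i = 0 → ∀ e, ¬ Marks H e y γ)) ∧
      (v = core y (γ * (l.map H.s).prod) ∧ l.length = p.length ∨
        ∃ e, port e ∈ p.support ∧ Marks H e y (γ * (l.map H.s).prod) ∧ l.length < p.length ∧
          (l = [] → p.snd = port e)) := by
  induction p generalizing γ with
  | nil => exact ⟨[], by simp, by simp, .inl (by simpa using hu)⟩
  | @cons _ u' _ h q ih =>
    subst hu
    obtain ⟨hq, hnotMem⟩ := (Walk.cons_isPath_iff h q).1 hp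
    rcases adj_core_iff.1 h with ⟨e, rfl, he⟩ | ⟨i, rfl, hi⟩
    · exact ⟨[], by simp, by simp, .inr ⟨e, by simp, by simpa using he, by simp, by simp⟩⟩
    obtain ⟨l, hl, hhead, hend⟩ := ih hq rfl
    refine ⟨i :: l, List.isChain_cons.2 ⟨?_, hl⟩, ?_, ?_⟩
    · rintro j hj rfl
      exact hnotMem (by simpa [H.mul_s_mul_s] using (hhead i hj).1)
    · rintro j ⟨rfl⟩
      exact ⟨by simp, hi⟩
    · rw [List.map_cons, List.prod_cons, ← mul_assoc]
      refine hend.imp (fun ⟨hv, hlen⟩ => ⟨hv, by simp [hlen]⟩) ?_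
      rintro ⟨e, hmem, he, hlen, -⟩
      exact ⟨e, by simp [hmem], he, by simpa using hlen, by simp⟩

theorem Marks.eq_one_or_eq_s_zero {δ : Γ} (h : Marks H e y γ) (h' : Marks H e y (γ * δ)) :
    δ = 1 ∨ δ = H.s 0 := by
  obtain ⟨-, rfl | rfl⟩ := h <;> obtain ⟨-, h' | h'⟩ := h'
  · exact .inl (mul_eq_left.1 h')
  · exact .inr (mul_left_cancel h')
  · rw [mul_assoc, mul_eq_left, ← inv_eq_iff_mul_eq_one,
      inv_eq_of_mul_eq_one_left (H.mul_self 0)] at h'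
    exact .inr h'.symm
  · exact .inl (mul_eq_left.1 h')

/-- By the distance between the marked points, a short cycle through a port can only return to that
same port, along the edge which the port subdivides. -/
theorem lt_length_of_isCycle_cons_core {h : (graph H).Adj (port e) (core y γ)}
    {p : (graph H).Walk (core y γ) (port e)} (hw : (Walk.cons h p).IsCycle) :
    R < (Walk.cons h p).length := by
  by_contra! hlen
  obtain ⟨hp, hedge⟩ := (Walk.cons_isCycle_iff p h).1 hw
  rw [Walk.length_cons] at hlen
  obtain ⟨l, hl, hhead, ⟨hv, -⟩ | ⟨e', -, he', hlt, hnil⟩⟩ := exists_word_of_isPath hp rfl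
  · cases hv
  obtain rfl : e = e' := Marks.eq_of_mul_prod h he' (by omega)
  have hlR : l ∈ reducedWords (Fin 3) (R + 1) := ⟨hl, by omega⟩
  rcases Marks.eq_one_or_eq_s_zero h he' with hone | hs
  · refine hedge ?_
    rw [Sym2.eq_swap]
    nth_rw 2 [← hnil (H.eq_nil_of_prod_eq hlR hone)]
    exact Walk.mk_start_snd_mem_edges (Walk.not_nil_of_ne (by simp))
  · obtain rfl := H.eq_singleton_of_prod_eq hlR hs
    exact (hhead 0 rfl).2 rfl e h

theorem lt_length_of_isCycle_port {w : (graph H).Walk (port e) (port e)} (hw : w.IsCycle) :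
    R < w.length := by
  have hcore : ∀ {w : (graph H).Walk (port e) (port e)}, w.IsCycle → w.snd ≠ node e.1.1 →
      R < w.length := by
    intro w hw hsnd
    cases w with
    | nil => exact absurd rfl hw.ne_nil
    | @cons _ v _ h p =>
      have hv : v ∈ (graph H).neighborSet (port e) := h
      rw [neighborSet_port] at hv
      rcases hv with rfl | rfl | rfl
      · exact absurd (Walk.snd_cons _ _) hsnd
      all_goals exact lt_length_of_isCycle_cons_core hw
  by_cases hsnd : w.snd = node e.1.1
  · rw [← Walk.length_reverse]
    refine hcore hw.reverse fun h => hw.snd_ne_penultimate ?_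
    rw [hsnd, ← h, Walk.snd_reverse]
  · exact hcore hw hsnd

theorem lt_length_of_isCycle_core {w : (graph H).Walk (core y γ) (core y γ)} (hw : w.IsCycle)
    (hports : ∀ e, port e ∉ w.support) : R < w.length := by
  by_contra! hlen
  cases w with
  | nil => exact hw.ne_nil rfl
  | cons h p =>
    obtain ⟨hp, -⟩ := (Walk.cons_isCycle_iff p h).1 hw
    have hthree := hw.three_le_length
    rw [Walk.length_cons] at hlen hthree
    rcases adj_core_iff.1 h with ⟨e, rfl, -⟩ | ⟨i, rfl, -⟩
    · exact hports e (by simp)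
    obtain ⟨l, hl, -, ⟨hv, hlen_eq⟩ | ⟨e, hmem, -⟩⟩ := exists_word_of_isPath hp rfl
    · rw [core.injEq, mul_assoc, left_eq_mul, ← inv_eq_iff_mul_eq_one,
        inv_eq_of_mul_eq_one_left (H.mul_self i)] at hv
      have := H.eq_singleton_of_prod_eq ⟨hl, by omega⟩ hv.2.symm
      rw [this] at hlen_eq
      simp at hlen_eq
      omega
    · exact hports e (by simp [hmem])

theorem isAcyclic_induce_range_node (hT : IsTemplate T) :
    ((graph H).induce (Set.range node)).IsAcyclic := by
  have hspec : ∀ v : Set.range (node (T := T) (Γ := Γ)), node v.2.choose = v.1 := fun v =>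
    v.2.choose_spec
  refine hT.isAcyclic.comap ⟨fun v => v.2.choose, fun {v v'} h => ?_⟩ fun v v' h => ?_
  · rwa [induce_adj, ← hspec v, ← hspec v'] at h
  · exact Subtype.ext (by rw [← hspec v, ← hspec v', show v.2.choose = v'.2.choose from h])

theorem lt_length_of_isCycle (hT : IsTemplate T) {v : Expansion T Γ} {w : (graph H).Walk v v}
    (hw : w.IsCycle) : R < w.length := by
  classical
  by_cases hport : ∃ e, port e ∈ w.support
  · obtain ⟨e, he⟩ := hport
    rw [← Walk.length_rotate w _ he]
    exact lt_length_of_isCycle_port (hw.rotate he)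
  by_cases hcore : ∃ y γ, core y γ ∈ w.support
  · obtain ⟨y, γ, hmem⟩ := hcore
    rw [← Walk.length_rotate w _ hmem]
    refine lt_length_of_isCycle_core (hw.rotate hmem) fun e he => hport ⟨e, ?_⟩
    exact (Walk.mem_support_rotate_iff ..).1 he
  have hnode : ∀ x ∈ w.support, x ∈ Set.range node := by
    rintro (a | e | ⟨y, γ⟩) hx
    · exact ⟨a, rfl⟩
    · exact absurd ⟨e, hx⟩ hport
    · exact absurd ⟨y, γ, hx⟩ hcore
  have hind : (w.induce _ hnode).IsCycle :=
    .of_map (f := (Embedding.induce _).toHom) (by rwa [Walk.map_induce])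
  exact absurd hind (isAcyclic_induce_range_node hT _)

variable {S : Set (Expansion T Γ)}

/-- The arc of the Cayley graph which an edge of the expansion is part of. -/
def arc (H : Host (Link T) R Γ) : Expansion T Γ × Expansion T Γ → Γ × Γ
  | (core _ γ, core _ δ) => (γ, δ)
  | (core _ γ, port _) => (γ, γ * H.s 0)
  | (port _, core _ δ) => (δ * H.s 0, δ)
  | _ => 1

theorem cayleyCut_le_ncard_crossing [Finite A] [Finite Y] [Finite Γ] [DecidableEq Γ]
    {F : Finset Γ} (hF : ∀ γ, γ ∈ F ↔ core y γ ∈ S) :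
    cayleyCut H.s F ≤ (crossing (graph H) S).ncard := by
  refine (cayleyCut_le_ncard H.s_injective).trans ?_
  refine (Set.ncard_le_ncard (t := arc H '' crossing (graph H) S) ?_).trans (Set.ncard_image_le)
  rintro ⟨γ, δ⟩ ⟨hγ, hδ, i, h⟩
  obtain rfl : δ = γ * H.s i := h
  rw [hF] at hγ hδ
  by_cases hdirect : i = 0 → ∀ e, ¬ Marks H e y γ
  · exact ⟨(core y γ, core y (γ * H.s i)), ⟨hγ, hδ, adj_core_iff.2 (.inr ⟨i, rfl, hdirect⟩)⟩, rfl⟩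
  push Not at hdirect
  obtain ⟨rfl, e, he⟩ := hdirect
  by_cases hport : port e ∈ S
  · exact ⟨(port e, core y (γ * H.s 0)), ⟨hport, hδ, he.mul_s_zero⟩,
      Prod.ext (H.mul_s_mul_s γ 0) rfl⟩
  · exact ⟨(core y γ, port e), ⟨hγ, hport, he⟩, rfl⟩

theorem subsingleton_or_subsingleton_compl [Finite A] [Finite Y] [Finite Γ]
    (hS : (crossing (graph H) S).ncard < 4) (y : Y) :
    (core y ⁻¹' S).Subsingleton ∨ (core y ⁻¹' Sᶜ).Subsingleton := by
  classical
  have := Fintype.ofFinite Γ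
  have hcut :=
    (cayleyCut_le_ncard_crossing (y := y) (F := (core y ⁻¹' S).toFinset) (by simp)).trans_lt hS
  by_contra! hlarge
  rw [Set.preimage_compl, ← Set.coe_toFinset (core y ⁻¹' S), ← Finset.coe_compl] at hlarge
  refine hcut.not_ge (four_le_cayleyCut H.closure_range H.s_injective H.s_ne_one H.mul_self ?_ ?_)
  · exact Finset.one_lt_card_iff_nontrivial.2 hlarge.1
  · exact Finset.one_lt_card_iff_nontrivial.2 hlarge.2

omit [Group Γ] in
theorem ncard_le_of_subsingleton [Finite A] [Finite Y] (hS : ∀ y, (core y ⁻¹' S).Subsingleton) :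
    S.ncard ≤ Nat.card (A ⊕ Link T ⊕ Y) := by
  rw [← Set.ncard_univ]
  refine Set.ncard_le_ncard_of_injOn
    (fun
      | node a => .inl a
      | port e => .inr (.inl e)
      | core y _ => .inr (.inr y)) (fun _ _ => trivial) ?_
  rintro (_ | _ | ⟨y, γ⟩) h (_ | _ | ⟨z, δ⟩) h' heq
  case core.core =>
    obtain rfl : y = z := by simpa using heq
    rw [hS y h h']
  all_goals simp_all

/-- The edge of the template which an edge of the expansion can be charged to. -/
def charge : Expansion T Γ × Expansion T Γ → (A ⊕ Y) × (A ⊕ Y)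
  | (port e, core _ _) => (.inl e.1.1, .inr e.1.2)
  | (core _ _, port e) => (.inr e.1.2, .inl e.1.1)
  | (v, v') => (proj v, proj v')

theorem exists_core_not_mem (hS : (core e.1.2 ⁻¹' S).Subsingleton) :
    ∃ γ, core e.1.2 γ ∉ S ∧ (graph H).Adj (port e) (core e.1.2 γ) := by
  by_cases hmem : core e.1.2 (H.p e) ∈ S
  · refine ⟨H.p e * H.s 0, fun hmem' => H.mul_s_ne_self (H.p e) 0 (hS hmem' hmem), rfl, .inr rfl⟩
  · exact ⟨H.p e, hmem, rfl, .inl rfl⟩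

theorem crossing_subset_image_charge (hT : IsTemplate T) {S' : Set (A ⊕ Y)}
    (hnode : ∀ a, .inl a ∈ S' ↔ node a ∈ S)
    (hcore : ∀ y, .inr y ∈ S' → (core y ⁻¹' Sᶜ).Subsingleton)
    (hcore' : ∀ y, .inr y ∉ S' → (core y ⁻¹' S).Subsingleton) :
    crossing T S' ⊆ charge '' crossing (graph H) S := by
  rintro ⟨a | y, b | z⟩ ⟨h, h', hadj⟩
  · exact ⟨(node a, node b), ⟨(hnode a).1 h, mt (hnode b).2 h', hadj⟩, rfl⟩
  · by_cases hport : port ⟨(a, z), hadj⟩ ∈ S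
    · obtain ⟨γ, hγ, hadj'⟩ := exists_core_not_mem (H := H) (e := ⟨(a, z), hadj⟩) (hcore' z h')
      exact ⟨(port _, core z γ), ⟨hport, hγ, hadj'⟩, rfl⟩
    · exact ⟨(node a, port _), ⟨(hnode a).1 h, hport, rfl⟩, rfl⟩
  · by_cases hport : port ⟨(b, y), hadj.symm⟩ ∈ S
    · exact ⟨(port _, node b), ⟨hport, mt (hnode b).2 h', rfl⟩, rfl⟩
    · obtain ⟨γ, hγ, hadj'⟩ :=
        exists_core_not_mem (H := H) (e := ⟨(b, y), hadj.symm⟩) (hcore y h)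
      exact ⟨(core y γ, port _), ⟨not_not.1 hγ, hport, hadj'.symm⟩, rfl⟩
  · exact absurd hadj (hT.not_adj_inr y z)

theorem cyclicallyEdgeConnected_graph [Finite A] [Finite Y] [Finite Γ] (hT : IsTemplate T)
    (hR : Nat.card (A ⊕ Link T ⊕ Y) ≤ R) : CyclicallyEdgeConnected (graph H) 4 := by
  intro S hcyc hcyc'
  refine le_trans ?_ ncard_crossing_le_ncard_cut
  by_contra! hS
  have hlarge : ∀ {U : Set (Expansion T Γ)}, HasCycle ((graph H).induce U) →
      ¬ ∀ y, (core y ⁻¹' U).Subsingleton := fun hU hsub => by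
    obtain ⟨_, w, hw, hlen⟩ := hU.exists_isCycle_length_le
    have := lt_length_of_isCycle hT hw
    have := ncard_le_of_subsingleton hsub
    omega
  let S' : Set (A ⊕ Y) := {x | Sum.elim (node · ∈ S) (fun y => (core y ⁻¹' Sᶜ).Subsingleton) x}
  have hsmall : ∀ y, .inr y ∉ S' → (core y ⁻¹' S).Subsingleton := fun y =>
    (subsingleton_or_subsingleton_compl hS y).resolve_right
  obtain ⟨y, hy⟩ := not_forall.1 (hlarge hcyc)
  obtain ⟨y', hy'⟩ := not_forall.1 (hlarge hcyc')
  have hfour := hT.four_le_ncard_crossing S' y y' (not_not.1 (mt (hsmall y) hy)) hy'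
  have hcharge := Set.ncard_le_ncard
    (crossing_subset_image_charge (H := H) (S := S) hT (fun _ => Iff.rfl) (fun _ => id) hsmall)
  exact hS.not_ge (hfour.trans (hcharge.trans Set.ncard_image_le))

end Expansion

theorem exists_expansion {A Y : Type} [Finite A] [Finite Y] {T : SimpleGraph (A ⊕ Y)}
    (hT : IsTemplate T) (n : ℕ) : ∃ (V : Type) (_ : Fintype V) (G : SimpleGraph V) (π : V → A ⊕ Y),
      IsCubic G ∧ CyclicallyEdgeConnected G 4 ∧
      (∀ (v : V) (w : G.Walk v v), w.IsCycle → n < w.length) ∧ IsContraction G T π := by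
  obtain ⟨Γ, _, _, ⟨H⟩⟩ := exists_host (Link T) (n + Nat.card (A ⊕ Link T ⊕ Y) + 2)
  refine ⟨Expansion T Γ, Fintype.ofFinite _, Expansion.graph H, Expansion.proj,
    Expansion.isCubic_graph hT (by omega), Expansion.cyclicallyEdgeConnected_graph hT (by omega),
    fun v w hw => ?_, Expansion.isContraction_proj hT⟩
  have := Expansion.lt_length_of_isCycle hT hw
  omega

end Template

/-! ### The flower template -/

section Flower

/-- The supervertices of a petal: the blob `(t, j)` is the `j`-th terminal of the tripod `t`. -/
abbrev Blob : Type := (Fin 2 × Fin 2) × Fin 3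

/-- The ordinary vertices of a petal, which consists of three frames and four tripods. A frame has
two hubs and four rims, a tripod has an apex, three mids and three tips. -/
abbrev Joint : Type :=
  (Option (Fin 2) × (Fin 2 ⊕ Fin 2 × Fin 2)) ⊕ (Fin 2 × Fin 2) × (Unit ⊕ Fin 3 ⊕ Fin 3)

-- Shortcuts: unfolding `Joint` in every finite check below makes the instance search too deep.
instance : DecidableEq Joint := inferInstance

instance : Fintype Joint := inferInstance

namespace Joint

abbrev hub (u : Option (Fin 2)) (e : Fin 2) : Joint := .inl (u, .inl e)

abbrev rim (u : Option (Fin 2)) (p : Fin 2 × Fin 2) : Joint := .inl (u, .inr p)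

abbrev apex (t : Fin 2 × Fin 2) : Joint := .inr (t, .inl ())

abbrev mid (t : Fin 2 × Fin 2) (j : Fin 3) : Joint := .inr (t, .inr (.inl j))

abbrev tip (t : Fin 2 × Fin 2) (j : Fin 3) : Joint := .inr (t, .inr (.inr j))

end Joint

open Joint

/-- The blob at a corner of a frame. The corners of the frame `some u` are the first two terminals
of the tripods `(u, 0)` and `(u, 1)`; the corners of `none` are the last terminals of all
tripods. -/
def corner : Option (Fin 2) → Fin 2 × Fin 2 → Blob
  | some u, (m, h) => ((u, m), h.castSucc)
  | none, t => (t, 2)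

/-- The blob in which the petals of a flower meet. -/
def root : Blob := corner none (0, 0)

/-- The three neighbours of an ordinary vertex of a petal. In the Petersen graph, the neighbours of
a vertex span no edges and the other six vertices form a cycle; a tripod is the Petersen graph in
which three alternate vertices of that cycle became its terminals. A frame is the Petersen graph
minus two edges whose ends became its corners. -/
def nbr : Joint → Fin 3 → Joint ⊕ Blob
  | .inl (u, .inl e) => ![.inl (hub u (e + 1)), .inl (rim u (0, e)), .inl (rim u (1, e + 1))]
  | .inl (u, .inr (h, h')) =>
    ![.inl (hub u (h + h')), .inr (corner u (0, h)), .inr (corner u (1, h'))]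
  | .inr (t, .inl _) => ![.inl (mid t 0), .inl (mid t 1), .inl (mid t 2)]
  | .inr (t, .inr (.inl j)) => ![.inl (apex t), .inl (tip t j), .inr (t, j)]
  | .inr (t, .inr (.inr j)) => ![.inl (mid t j), .inr (t, j + 1), .inr (t, j + 2)]

/-- The two rims of a frame at the corner `(m, h)`. -/
def side (m h i : Fin 2) : Fin 2 × Fin 2 := if m = 0 then (h, i) else (i, h)

/-- The five neighbours of a blob in a petal. -/
def contact : Blob → Fin 5 → Joint
  | (t, j) => ![mid t j, tip t (j + 1), tip t (j + 2),
      ![rim t.1 (side t.2 0 0), rim t.1 (side t.2 1 0), rim none (side t.1 t.2 0)] j,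
      ![rim t.1 (side t.2 0 1), rim t.1 (side t.2 1 1), rim none (side t.1 t.2 1)] j]

theorem nbr_injective : ∀ a, Function.Injective (nbr a) := by
  decide +kernel

theorem nbr_ne_inl : ∀ a k, nbr a k ≠ .inl a := by
  decide +kernel

theorem exists_nbr_eq_inl : ∀ a k a', nbr a k = .inl a' → ∃ k', nbr a' k' = .inl a := by
  decide +kernel

theorem contact_injective : ∀ b, Function.Injective (contact b) := by
  decide +kernel

theorem exists_nbr_eq_inr_iff : ∀ a b, (∃ k, nbr a k = .inr b) ↔ ∃ l, contact b l = a := by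
  decide +kernel

/-- The distance from the apex of a tripod, and a similar ordering of a frame. -/
def height : Joint → ℕ
  | .inl (_, .inl e) => e
  | .inl (_, .inr _) => 2
  | .inr (_, .inl _) => 0
  | .inr (_, .inr (.inl _)) => 1
  | .inr (_, .inr (.inr _)) => 2

theorem eq_of_height_le : ∀ a k k', (∃ a', nbr a k = .inl a' ∧ height a' ≤ height a) →
    (∃ a', nbr a k' = .inl a' ∧ height a' ≤ height a) → k = k' := by
  decide +kernel

section Flow

/-- The colours `p j` and `q j` alternate along a cycle of length six in the Petersen graph; the
colours of all other edges follow from Kirchhoff's law. -/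
theorem exists_eq_zero_of_petersen (p q : Fin 3 → Klein)
    (h : ∀ j, p j ≠ 0 ∧ q j ≠ 0 ∧ p j + q j ≠ 0 ∧ p (j + 2) + q (j + 1) ≠ 0) :
    ∃ j, p j + q j + (p (j + 2) + q (j + 1)) = 0 := by
  revert p q
  decide +kernel

/-- Joining the corners `(0, 0)`, `(0, 1)` and the corners `(1, 0)`, `(1, 1)` of a frame would
complete it to the Petersen graph. -/
theorem sum_eq_zero_or_sum_eq_zero_of_frame (a b : Fin 2 → Fin 2 → Klein)
    (ha : ∀ i j, a i j ≠ 0) (hb : ∀ i j, b i j ≠ 0) (hab : ∀ i j, a i j + b i j ≠ 0)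
    (hhub : a 0 1 + b 0 1 + (a 1 0 + b 1 0) ≠ 0) (hrow : ∑ j, a 0 j = ∑ j, a 1 j)
    (hcol : ∑ i, b i 0 = ∑ i, b i 1) : ∑ j, a 0 j = 0 ∨ ∑ i, b i 0 = 0 := by
  simp only [Fin.sum_univ_two] at *
  have htwo : (2 : Klein) = 0 := by decide
  by_contra! hne
  obtain ⟨j, hj⟩ :=
    exists_eq_zero_of_petersen ![a 0 1, b 0 0 + b 1 0, a 1 0] ![b 0 1, b 1 0, a 0 0 + a 0 1] <| by
      intro j
      fin_cases j <;> simp <;> grind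
  fin_cases j <;> simp [add_assoc] at hj <;> grind

/-- A nowhere-zero Klein flow on a petal, with Kirchhoff's law imposed everywhere but at the
root. -/
structure IsPetalFlow (f : Joint ⊕ Blob → Joint ⊕ Blob → Klein) : Prop where
  symm : ∀ x x', f x x' = f x' x
  ne_zero : ∀ a k, f (.inl a) (nbr a k) ≠ 0
  sum_nbr : ∀ a, ∑ k, f (.inl a) (nbr a k) = 0
  sum_contact : ∀ b, b ≠ root → ∑ l, f (.inr b) (.inl (contact b l)) = 0

/-- The total flow between the blob `b` and its tripod. -/
def tripodFlow (f : Joint ⊕ Blob → Joint ⊕ Blob → Klein) (b : Blob) : Klein :=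
  f (.inl (contact b 0)) (.inr b) + f (.inl (contact b 1)) (.inr b) +
    f (.inl (contact b 2)) (.inr b)

/-- The total flow between the blob `b` and its frame. -/
def frameFlow (f : Joint ⊕ Blob → Joint ⊕ Blob → Klein) (b : Blob) : Klein :=
  f (.inl (contact b 3)) (.inr b) + f (.inl (contact b 4)) (.inr b)

variable {f : Joint ⊕ Blob → Joint ⊕ Blob → Klein}

namespace IsPetalFlow

theorem tripodFlow_eq_frameFlow (hf : IsPetalFlow f) {b : Blob} (hb : b ≠ root) :
    tripodFlow f b = frameFlow f b := by
  have hsum := hf.sum_contact b hb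
  simp only [Fin.sum_univ_five, hf.symm (.inr b)] at hsum
  rw [tripodFlow, frameFlow, ← CharTwo.add_eq_zero]
  linear_combination hsum

theorem mid_inr_eq (hf : IsPetalFlow f) (t : Fin 2 × Fin 2) (j : Fin 3) :
    f (.inl (mid t j)) (.inr (t, j)) =
      f (.inl (apex t)) (.inl (mid t j)) + f (.inl (tip t j)) (.inl (mid t j)) := by
  have hmid := hf.sum_nbr (mid t j)
  rw [Fin.sum_univ_three, CharTwo.add_eq_zero] at hmid
  rw [hf.symm (.inl (apex t)), hf.symm (.inl (tip t j))]
  exact hmid.symm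

theorem tip_mid_eq (hf : IsPetalFlow f) (t : Fin 2 × Fin 2) (j : Fin 3) :
    f (.inl (tip t j)) (.inl (mid t j)) =
      f (.inl (tip t j)) (.inr (t, j + 1)) + f (.inl (tip t j)) (.inr (t, j + 2)) := by
  have htip := hf.sum_nbr (tip t j)
  rw [Fin.sum_univ_three, add_assoc, CharTwo.add_eq_zero] at htip
  exact htip

theorem sum_tripodFlow (hf : IsPetalFlow f) (t : Fin 2 × Fin 2) :
    ∑ j, tripodFlow f (t, j) = 0 := by
  have hapex := hf.sum_nbr (apex t)
  have hflow : ∀ j, tripodFlow f (t, j) = f (.inl (apex t)) (.inl (mid t j)) +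
      (f (.inl (tip t j)) (.inr (t, j + 1)) + f (.inl (tip t j)) (.inr (t, j + 2))) +
      f (.inl (tip t (j + 1))) (.inr (t, j)) + f (.inl (tip t (j + 2))) (.inr (t, j)) := fun j => by
    rw [← hf.tip_mid_eq, ← hf.mid_inr_eq]
    rfl
  simp only [hflow, Fin.sum_univ_three] at hapex ⊢
  have htwo : (2 : Klein) = 0 := by decide
  simp only [nbr, Matrix.cons_val_zero, Matrix.cons_val_one, Matrix.cons_val, zero_add,
    Fin.reduceAdd] at hapex ⊢
  grind

theorem exists_tripodFlow_ne_zero (hf : IsPetalFlow f) (t : Fin 2 × Fin 2) :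
    ∃ j, tripodFlow f (t, j) ≠ 0 := by
  by_contra! hzero
  have hmid : ∀ j, f (.inl (tip t (j + 2))) (.inr (t, j + 2 + 1)) +
      f (.inl (tip t (j + 1))) (.inr (t, j + 1 + 2)) =
        f (.inl (mid t j)) (.inr (t, j)) := fun j => by
    obtain ⟨h₁, h₂⟩ : j + 1 + 2 = j ∧ j + 2 + 1 = j := by decide +revert
    rw [h₁, h₂, ← CharTwo.add_eq_zero, ← hzero j]
    change _ = f (.inl (mid t j)) (.inr (t, j)) + f (.inl (tip t (j + 1))) (.inr (t, j)) +
      f (.inl (tip t (j + 2))) (.inr (t, j))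
    abel
  obtain ⟨j, hj⟩ := exists_eq_zero_of_petersen (fun j => f (.inl (tip t j)) (.inr (t, j + 1)))
    (fun j => f (.inl (tip t j)) (.inr (t, j + 2))) fun j =>
      ⟨hf.ne_zero (tip t j) 1, hf.ne_zero (tip t j) 2,
        hf.tip_mid_eq t j ▸ hf.ne_zero (tip t j) 0, hmid j ▸ hf.ne_zero (mid t j) 2⟩
  rw [hmid, ← hf.tip_mid_eq, hf.mid_inr_eq, add_left_comm, CharTwo.add_self_eq_zero, add_zero] at hj
  exact hf.ne_zero (apex t) j (by fin_cases j <;> exact hj)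

theorem frameFlow_corner_zero (f : Joint ⊕ Blob → Joint ⊕ Blob → Klein) (u : Option (Fin 2))
    (h : Fin 2) : frameFlow f (corner u (0, h)) =
      ∑ i, f (.inl (rim u (h, i))) (.inr (corner u (0, h))) := by
  fin_cases h <;> rcases u with _ | u <;> simp [frameFlow, contact, corner, side]

theorem frameFlow_corner_one (f : Joint ⊕ Blob → Joint ⊕ Blob → Klein) (u : Option (Fin 2))
    (h : Fin 2) : frameFlow f (corner u (1, h)) =
      ∑ i, f (.inl (rim u (i, h))) (.inr (corner u (1, h))) := by
  fin_cases h <;> rcases u with _ | u <;> simp [frameFlow, contact, corner, side]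

theorem rim_hub_eq (hf : IsPetalFlow f) (u : Option (Fin 2)) (h h' : Fin 2) :
    f (.inl (rim u (h, h'))) (.inl (hub u (h + h'))) =
      f (.inl (rim u (h, h'))) (.inr (corner u (0, h))) +
        f (.inl (rim u (h, h'))) (.inr (corner u (1, h'))) := by
  have hrim := hf.sum_nbr (rim u (h, h'))
  rw [Fin.sum_univ_three, add_assoc, CharTwo.add_eq_zero] at hrim
  exact hrim

theorem hub_hub_eq (hf : IsPetalFlow f) (u : Option (Fin 2)) (e : Fin 2) :
    f (.inl (hub u e)) (.inl (hub u (e + 1))) =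
      f (.inl (rim u (0, e))) (.inl (hub u e)) + f (.inl (rim u (1, e + 1))) (.inl (hub u e)) := by
  have hhub := hf.sum_nbr (hub u e)
  rw [Fin.sum_univ_three, add_assoc, CharTwo.add_eq_zero] at hhub
  rw [hf.symm _ (.inl (hub u e)), hf.symm _ (.inl (hub u e))]
  exact hhub

theorem sum_frameFlow (hf : IsPetalFlow f) (u : Option (Fin 2)) :
    ∑ p, frameFlow f (corner u p) = 0 := by
  have hhub₀ := hf.hub_hub_eq u 0
  have hhub₁ := hf.hub_hub_eq u 1
  have h₀₀ := hf.rim_hub_eq u 0 0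
  have h₀₁ := hf.rim_hub_eq u 0 1
  have h₁₀ := hf.rim_hub_eq u 1 0
  have h₁₁ := hf.rim_hub_eq u 1 1
  have hsymm := hf.symm (.inl (hub u 0)) (.inl (hub u 1))
  have htwo : (2 : Klein) = 0 := by decide
  simp only [Fintype.sum_prod_type, Fin.sum_univ_two, frameFlow_corner_zero, frameFlow_corner_one]
  simp only [zero_add, Fin.reduceAdd, add_zero] at *
  grind

theorem frameFlow_eq_zero_or_frameFlow_eq_zero (hf : IsPetalFlow f) (u : Option (Fin 2))
    (hrow : frameFlow f (corner u (0, 0)) = frameFlow f (corner u (0, 1)))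
    (hcol : frameFlow f (corner u (1, 0)) = frameFlow f (corner u (1, 1))) :
    frameFlow f (corner u (0, 0)) = 0 ∨ frameFlow f (corner u (1, 0)) = 0 := by
  simp only [frameFlow_corner_zero, frameFlow_corner_one] at hrow hcol ⊢
  refine sum_eq_zero_or_sum_eq_zero_of_frame
    (fun h h' => f (.inl (rim u (h, h'))) (.inr (corner u (0, h))))
    (fun h h' => f (.inl (rim u (h, h'))) (.inr (corner u (1, h'))))
    (fun h h' => hf.ne_zero (rim u (h, h')) 1) (fun h h' => hf.ne_zero (rim u (h, h')) 2)
    (fun h h' => ?_) ?_ hrow hcol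
  · exact hf.rim_hub_eq u h h' ▸ hf.ne_zero (rim u (h, h')) 0
  · rw [← hf.rim_hub_eq, ← hf.rim_hub_eq]
    exact hf.hub_hub_eq u 1 ▸ hf.ne_zero (hub u 1) 0

theorem tripodFlow_two (hf : IsPetalFlow f) (t : Fin 2 × Fin 2) :
    tripodFlow f (t, 2) = tripodFlow f (t, 0) + tripodFlow f (t, 1) := by
  rw [← CharTwo.add_eq_zero, add_comm, ← Fin.sum_univ_three fun j => tripodFlow f (t, j)]
  exact hf.sum_tripodFlow t

theorem frameFlow_corner_some (hf : IsPetalFlow f) (u m h : Fin 2) :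
    frameFlow f (corner (some u) (m, h)) = tripodFlow f ((u, m), h.castSucc) :=
  (hf.tripodFlow_eq_frameFlow (by decide +revert)).symm

theorem frameFlow_corner_none (hf : IsPetalFlow f) {t : Fin 2 × Fin 2} (ht : t ≠ (0, 0)) :
    frameFlow f (corner none t) = tripodFlow f (t, 2) :=
  (hf.tripodFlow_eq_frameFlow (by decide +revert)).symm

theorem tripodFlow_zero_two_eq (hf : IsPetalFlow f) (u : Fin 2) :
    tripodFlow f ((u, 0), 2) = tripodFlow f ((u, 1), 2) := by
  rw [← CharTwo.add_eq_zero, hf.tripodFlow_two, hf.tripodFlow_two]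
  simpa only [Fintype.sum_prod_type, Fin.sum_univ_two, hf.frameFlow_corner_some,
    Fin.castSucc_zero, Fin.castSucc_one]
    using hf.sum_frameFlow (some u)

theorem tripodFlow_two_ne_zero (hf : IsPetalFlow f) (u m : Fin 2) :
    tripodFlow f ((u, m), 2) ≠ 0 := by
  suffices hall : ∀ m', tripodFlow f ((u, m'), 2) ≠ 0 from hall m
  by_contra! hzero
  have hlast : ∀ m', tripodFlow f ((u, m'), 2) = 0 := by
    simpa only [Fin.exists_fin_two, Fin.forall_fin_two, hf.tripodFlow_zero_two_eq, or_self,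
      and_self] using hzero
  have hfirst : ∀ m', tripodFlow f ((u, m'), 0) = tripodFlow f ((u, m'), 1) := fun m' => by
    rw [← CharTwo.add_eq_zero, ← hf.tripodFlow_two, hlast m']
  have hcorner : ∃ m', tripodFlow f ((u, m'), 0) = 0 := by
    simpa only [Fin.exists_fin_two, hf.frameFlow_corner_some, Fin.castSucc_zero] using
      hf.frameFlow_eq_zero_or_frameFlow_eq_zero (some u)
        (by rw [hf.frameFlow_corner_some, hf.frameFlow_corner_some]; exact hfirst 0)
        (by rw [hf.frameFlow_corner_some, hf.frameFlow_corner_some]; exact hfirst 1)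
  obtain ⟨m', hm'⟩ := hcorner
  obtain ⟨j, hj⟩ := hf.exists_tripodFlow_ne_zero (u, m')
  fin_cases j
  exacts [hj hm', hj (hfirst m' ▸ hm'), hj (hlast m')]

end IsPetalFlow

theorem not_isPetalFlow (f : Joint ⊕ Blob → Joint ⊕ Blob → Klein) : ¬ IsPetalFlow f := by
  intro hf
  have hcol : frameFlow f (corner none (1, 0)) = frameFlow f (corner none (1, 1)) := by
    rw [hf.frameFlow_corner_none (by decide), hf.frameFlow_corner_none (by decide),
      hf.tripodFlow_zero_two_eq]
  have hrow : frameFlow f (corner none (0, 0)) = frameFlow f (corner none (0, 1)) := by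
    have hsum := hf.sum_frameFlow none
    rwa [Fintype.sum_prod_type, Fin.sum_univ_two, Fin.sum_univ_two, Fin.sum_univ_two, hcol,
      CharTwo.add_self_eq_zero, add_zero, CharTwo.add_eq_zero] at hsum
  rcases hf.frameFlow_eq_zero_or_frameFlow_eq_zero none hrow hcol with hzero | hzero
  · rw [hrow, hf.frameFlow_corner_none (by decide)] at hzero
    exact hf.tripodFlow_two_ne_zero 0 1 hzero
  · rw [hf.frameFlow_corner_none (by decide)] at hzero
    exact hf.tripodFlow_two_ne_zero 1 0 hzero

end Flow

/-- The pieces of a petal without its hubs and apexes: a rim, or a mid with the tip next to it. -/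
abbrev Arm : Type := (Option (Fin 2) × Fin 2 × Fin 2) ⊕ Blob

namespace Arm

/-- The blobs adjacent to an arm. -/
def blobs : Arm → Set Blob
  | .inl (u, h, h') => {corner u (0, h), corner u (1, h')}
  | .inr (t, _) => Set.range (t, ·)

/-- The arms adjacent to blobs on both sides of the cut `X`. -/
def split (X : Set Blob) : Set Arm :=
  {α | ∃ b ∈ α.blobs, ∃ b' ∈ α.blobs, b ∈ X ∧ b' ∉ X}

variable {X : Set Blob}

theorem mem_iff_mem_of_not_mem_split {α : Arm} (hα : α ∉ split X) {b b' : Blob}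
    (hb : b ∈ α.blobs) (hb' : b' ∈ α.blobs) : b ∈ X ↔ b' ∈ X :=
  ⟨fun h => by_contra fun h' => hα ⟨b, hb, b', hb', h, h'⟩,
    fun h => by_contra fun h' => hα ⟨b', hb', b, hb, h, h'⟩⟩

theorem four_le_ncard_split_of_frame {u : Option (Fin 2)}
    (hu : ∀ h h', ¬(corner u (0, h) ∈ X ↔ corner u (1, h') ∈ X)) : 4 ≤ (split X).ncard := by
  have hrim : Set.range (fun p : Fin 2 × Fin 2 => (.inl (u, p) : Arm)) ⊆ split X := by
    rintro _ ⟨⟨h, h'⟩, rfl⟩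
    by_contra hα
    exact hu h h' (mem_iff_mem_of_not_mem_split hα (.inl rfl) (.inr rfl))
  calc 4 = (Set.range fun p : Fin 2 × Fin 2 => (.inl (u, p) : Arm)).ncard := by
        rw [← Nat.card_coe_set_eq, Nat.card_range_of_injective fun p p' h => by simpa using h,
          Nat.card_eq_fintype_card, Fintype.card_prod, Fintype.card_fin]
    _ ≤ (split X).ncard := Set.ncard_le_ncard hrim

theorem corner_mem_iff_corner_mem {u : Option (Fin 2)} (hu : ∀ p, .inl (u, p) ∉ split X)
    (p p' : Fin 2 × Fin 2) : corner u p ∈ X ↔ corner u p' ∈ X := by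
  have hrim : ∀ h h', corner u (0, h) ∈ X ↔ corner u (1, h') ∈ X := fun h h' =>
    mem_iff_mem_of_not_mem_split (hu (h, h')) (.inl rfl) (.inr rfl)
  have hzero : ∀ p, corner u p ∈ X ↔ corner u (0, 0) ∈ X := by
    rintro ⟨m, h⟩
    fin_cases m
    exacts [(hrim h 0).trans (hrim 0 0).symm, (hrim 0 h).symm]
  rw [hzero p, hzero p']

/-- The other tripod of the same lower frame links all terminals of the tripod `t`. -/
theorem exists_mem_split_ne {t : Fin 2 × Fin 2} {j : Fin 3} (ht : .inr (t, j) ∈ split X) :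
    ∃ α ∈ split X, ∀ j, α ≠ .inr (t, j) := by
  by_contra! h
  have hframe : ∀ u, ∀ p p', corner u p ∈ X ↔ corner u p' ∈ X := fun u =>
    corner_mem_iff_corner_mem fun p hp => by simpa using h _ hp
  obtain ⟨u, m⟩ := t
  have htripod : ((u, m + 1), (0 : Fin 3)) ∈ X ↔ ((u, m + 1), (2 : Fin 3)) ∈ X :=
    mem_iff_mem_of_not_mem_split (α := .inr ((u, m + 1), 0)) (fun hα => by simpa using h _ hα)
      ⟨0, rfl⟩ ⟨2, rfl⟩
  have hlast : ∀ j : Fin 3, ((u, m), j) ∈ X ↔ ((u, m), (2 : Fin 3)) ∈ X := fun j => by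
    have hlow : ∀ h : Fin 2, ((u, m), h.castSucc) ∈ X ↔ ((u, m), (2 : Fin 3)) ∈ X := fun h =>
      (hframe (some u) (m, h) (m + 1, 0)).trans <| htripod.trans (hframe none (u, m + 1) (u, m))
    fin_cases j
    exacts [hlow 0, hlow 1, Iff.rfl]
  obtain ⟨_, ⟨j, rfl⟩, _, ⟨j', rfl⟩, hj, hj'⟩ := ht
  exact hj' ((hlast j').2 ((hlast j).1 hj))

theorem four_le_ncard_split_of_tripod {t : Fin 2 × Fin 2} {j : Fin 3}
    (ht : .inr (t, j) ∈ split X) : 4 ≤ (split X).ncard := by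
  obtain ⟨α, hα, hne⟩ := exists_mem_split_ne ht
  have hsub : insert α (Set.range fun j : Fin 3 => (.inr (t, j) : Arm)) ⊆ split X := by
    rintro _ (rfl | ⟨j, rfl⟩)
    exacts [hα, ht]
  calc 4 = (insert α (Set.range fun j : Fin 3 => (.inr (t, j) : Arm))).ncard := by
        rw [Set.ncard_insert_of_notMem (by rintro ⟨j, hj⟩; exact hne j hj.symm),
          ← Nat.card_coe_set_eq, Nat.card_range_of_injective fun j j' h => by simpa using h,
          Nat.card_fin]
    _ ≤ (split X).ncard := Set.ncard_le_ncard hsub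

theorem four_le_ncard_split {b b' : Blob} (hb : b ∈ X) (hb' : b' ∉ X) :
    4 ≤ (split X).ncard := by
  by_contra! hlt
  have hframe : ∀ u, ∃ h h', corner u (0, h) ∈ X ↔ corner u (1, h') ∈ X := fun u =>
    by_contra fun hu => hlt.not_ge <|
      four_le_ncard_split_of_frame fun h h' hiff => hu ⟨h, h', hiff⟩
  have htripod : ∀ t j j', (t, j) ∈ X ↔ (t, j') ∈ X := fun t j j' =>
    mem_iff_mem_of_not_mem_split (fun hα => hlt.not_ge (four_le_ncard_split_of_tripod (j := 0) hα))
      ⟨j, rfl⟩ ⟨j', rfl⟩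
  have hlow : ∀ t j, (t, j) ∈ X ↔ ((t.1, 0), (0 : Fin 3)) ∈ X := by
    rintro ⟨u, m⟩ j
    obtain ⟨h, h', hu⟩ := hframe (some u)
    rw [corner, corner, htripod (u, 0) _ 0, htripod (u, 1) _ 0] at hu
    rw [htripod (u, m) j 0]
    fin_cases m
    exacts [Iff.rfl, hu.symm]
  have hall : ∀ b, b ∈ X ↔ ((0, 0), (0 : Fin 3)) ∈ X := by
    rintro ⟨⟨u, m⟩, j⟩
    obtain ⟨h, h', hnone⟩ := hframe none
    rw [corner, corner, hlow, hlow (1, h')] at hnone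
    rw [hlow]
    fin_cases u
    exacts [Iff.rfl, hnone.symm]
  exact hb' ((hall b').2 ((hall b).1 hb))

end Arm

open Arm

/-- The arm containing an ordinary vertex of a petal, if there is one. -/
def owner : Joint → Option Arm
  | .inl (_, .inl _) => none
  | .inl (u, .inr p) => some (.inl (u, p))
  | .inr (_, .inl _) => none
  | .inr (t, .inr (.inl j)) => some (.inr (t, j))
  | .inr (t, .inr (.inr j)) => some (.inr (t, j))

theorem owner_eq_none_or_eq : ∀ a k a', nbr a k = .inl a' → owner a ≠ none →
    owner a' = none ∨ owner a' = owner a := by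
  decide +kernel

theorem exists_owner_eq_of_mem_split {S : Set (Joint ⊕ Blob)} {α : Arm}
    (hα : α ∈ split (Sum.inr ⁻¹' S)) :
    ∃ a k, owner a = some α ∧ ¬(.inl a ∈ S ↔ nbr a k ∈ S) := by
  by_contra hne
  have h : ∀ a k, owner a = some α → (.inl a ∈ S ↔ nbr a k ∈ S) := fun a k ha =>
    by_contra fun hiff => hne ⟨a, k, ha, hiff⟩
  obtain ⟨b, hb, b', hb', hbS, hbS'⟩ := hα
  suffices hconst : ∃ P, ∀ b ∈ α.blobs, .inr b ∈ S ↔ P by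
    obtain ⟨P, hP⟩ := hconst
    exact hbS' ((hP b' hb').2 ((hP b hb).1 hbS))
  rcases α with ⟨u, p⟩ | ⟨t, j⟩
  · refine ⟨.inl (rim u p) ∈ S, ?_⟩
    rintro _ (rfl | rfl)
    exacts [(h (rim u p) 1 rfl).symm, (h (rim u p) 2 rfl).symm]
  · refine ⟨.inl (mid t j) ∈ S, ?_⟩
    have htip := h (mid t j) 1 rfl
    rintro _ ⟨j', rfl⟩
    obtain rfl | rfl | rfl : j' = j ∨ j' = j + 1 ∨ j' = j + 2 := by omega
    exacts [(h (mid t _) 2 rfl).symm, (htip.trans (h (tip t j) 1 rfl)).symm,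
      (htip.trans (h (tip t j) 2 rfl)).symm]

section Graph

variable {ι : Type*} {i i' : ι} {a : Joint} {b b' : Blob}

/-- The supervertices of a flower with petals indexed by `ι`; all petals share the supervertex
`none`. -/
abbrev FlowerBlob (ι : Type*) : Type _ := Option (ι × {b : Blob // b ≠ root})

/-- The supervertex of a flower at the blob `b` of the petal `i`. -/
def place (i : ι) (b : Blob) : FlowerBlob ι :=
  if h : b = root then none else some (i, ⟨b, h⟩)

/-- The inclusion of the petal `i` into a flower. -/
def embed (i : ι) : Joint ⊕ Blob → ι × Joint ⊕ FlowerBlob ι :=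
  Sum.map (i, ·) (place i)

/-- The flower with petals indexed by `ι`, glued together at their roots. -/
def flower (ι : Type*) : SimpleGraph (ι × Joint ⊕ FlowerBlob ι) :=
  .fromRel fun x x' => ∃ i a k, x = .inl (i, a) ∧ x' = embed i (nbr a k)

theorem place_eq_place_iff (hb : b ≠ root) : place i' b' = place i b ↔ i' = i ∧ b' = b := by
  by_cases hb' : b' = root
  · simp [place, hb, hb', hb.symm]
  · simp [place, hb, hb']

theorem place_injective (i : ι) : Function.Injective (place i) := fun b b' h => by
  by_cases hb : b = root
  · by_contra hne
    have hb' : b' ≠ root := fun hb' => hne (hb.trans hb'.symm)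
    exact hne ((place_eq_place_iff hb').1 h).2
  · exact ((place_eq_place_iff hb).1 h.symm).2.symm

theorem embed_injective (i : ι) : Function.Injective (embed i) :=
  Function.Injective.sumMap (Prod.mk_right_injective i) (place_injective i)

theorem neighborSet_flower_inl (i : ι) (a : Joint) :
    (flower ι).neighborSet (.inl (i, a)) = Set.range fun k => embed i (nbr a k) := by
  ext x
  rw [mem_neighborSet, flower, fromRel_adj]
  constructor
  · rintro ⟨-, ⟨_, _, k, h, rfl⟩ | ⟨i', a', k, rfl, h⟩⟩
    · cases h
      exact ⟨k, rfl⟩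
    · rcases hk : nbr a' k with a'' | b
      · rw [hk] at h
        cases h
        obtain ⟨k', hk'⟩ := exists_nbr_eq_inl _ _ _ hk
        exact ⟨k', congrArg (embed i) hk'⟩
      · rw [hk] at h
        cases h
  · rintro ⟨k, rfl⟩
    exact ⟨fun h => nbr_ne_inl a k (embed_injective i h.symm), .inl ⟨i, a, k, rfl, rfl⟩⟩

theorem flower_adj_embed_nbr (i : ι) (a : Joint) (k : Fin 3) :
    (flower ι).Adj (.inl (i, a)) (embed i (nbr a k)) :=
  (neighborSet_flower_inl i a).ge ⟨k, rfl⟩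

theorem not_flower_adj_inr (y y' : FlowerBlob ι) :
    ¬(flower ι).Adj (.inr y) (.inr y') := by
  rw [flower, fromRel_adj]
  rintro ⟨-, ⟨_, _, _, h, -⟩ | ⟨_, _, _, h, -⟩⟩ <;> cases h

theorem neighborSet_flower_inr (i : ι) (hb : b ≠ root) :
    (flower ι).neighborSet (embed i (.inr b)) = Set.range fun l => .inl (i, contact b l) := by
  ext x
  rw [mem_neighborSet]
  rcases x with ⟨i', a⟩ | y
  · rw [adj_comm, ← mem_neighborSet, neighborSet_flower_inl]
    have hnbr : ∀ k, embed i' (nbr a k) = embed i (.inr b) ↔ i' = i ∧ nbr a k = .inr b :=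
        fun k => by
      rcases nbr a k with a' | b'
      · simp [embed]
      · simpa [embed] using place_eq_place_iff hb
    simp only [Set.mem_range, hnbr, exists_and_left, exists_nbr_eq_inr_iff, Sum.inl.injEq,
      Prod.mk.injEq, eq_comm]
  · exact iff_of_false (not_flower_adj_inr _ y) (by simp)

theorem image_split_subset_image_crossing (S : Set (ι × Joint ⊕ FlowerBlob ι)) :
    some '' split (Sum.inr ⁻¹' (embed i ⁻¹' S)) ⊆
      (fun q => (Sum.elim (owner ∘ Prod.snd) (fun _ => none) q.1).or
        (Sum.elim (owner ∘ Prod.snd) (fun _ => none) q.2)) '' crossing (flower ι) S := by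
  rintro _ ⟨α, hα, rfl⟩
  obtain ⟨a, k, howner, hiff⟩ := exists_owner_eq_of_mem_split hα
  have hadj := flower_adj_embed_nbr i a k
  by_cases ha : .inl (i, a) ∈ S
  · exact ⟨(.inl (i, a), embed i (nbr a k)), ⟨ha, fun h => hiff ⟨fun _ => h, fun _ => ha⟩, hadj⟩,
      by simp [howner]⟩
  · have hnbr : embed i (nbr a k) ∈ S := by_contra fun h =>
      hiff ⟨fun h' => absurd h' ha, fun h' => absurd h' h⟩
    refine ⟨(embed i (nbr a k), .inl (i, a)), ⟨hnbr, ha, hadj.symm⟩, ?_⟩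
    rcases hk : nbr a k with a' | b
    · rcases owner_eq_none_or_eq a k a' hk (by simp [howner]) with h | h <;>
        simp [embed, h, howner]
    · simp [embed, howner]

theorem exists_place_eq {y : FlowerBlob ι} (hy : y ≠ none) :
    ∃ i b, place i b = y := by
  obtain ⟨⟨i, b, hb⟩, rfl⟩ := Option.ne_none_iff_exists'.1 hy
  exact ⟨i, b, dif_neg hb⟩

theorem exists_place_mem_place_not_mem {U : Set (FlowerBlob ι)}
    {y y' : FlowerBlob ι} (hy : y ∈ U) (hy' : y' ∉ U) :
    ∃ i b b', place i b ∈ U ∧ place i b' ∉ U := by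
  have hroot : ∀ i : ι, place i root = none := fun i => dif_pos rfl
  by_cases hnone : none ∈ U
  · obtain ⟨i, b, rfl⟩ := exists_place_eq fun h : y' = none => hy' (h ▸ hnone)
    exact ⟨i, root, b, (hroot i).symm ▸ hnone, hy'⟩
  · obtain ⟨i, b, rfl⟩ := exists_place_eq fun h : y = none => hnone (h ▸ hy)
    exact ⟨i, b, root, hy, (hroot i).symm ▸ hnone⟩

theorem four_le_ncard_crossing_flower [Finite ι] {y y' : FlowerBlob ι}
    {S : Set (ι × Joint ⊕ FlowerBlob ι)} (hy : .inr y ∈ S)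
    (hy' : .inr y' ∉ S) : 4 ≤ (crossing (flower ι) S).ncard := by
  obtain ⟨i, b, b', hb, hb'⟩ := exists_place_mem_place_not_mem (U := Sum.inr ⁻¹' S) hy hy'
  calc 4 ≤ (split (Sum.inr ⁻¹' (embed i ⁻¹' S))).ncard := four_le_ncard_split hb hb'
    _ = (some '' split (Sum.inr ⁻¹' (embed i ⁻¹' S))).ncard :=
      (Set.ncard_image_of_injective _ (Option.some_injective _)).symm
    _ ≤ _ := Set.ncard_le_ncard (image_split_subset_image_crossing S)
    _ ≤ (crossing (flower ι) S).ncard := Set.ncard_image_le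

theorem isTemplate_flower [Finite ι] : IsTemplate (flower ι) where
  not_adj_inr := not_flower_adj_inr
  ncard_neighborSet := by
    rintro ⟨i, a⟩
    rw [neighborSet_flower_inl, ← Nat.card_coe_set_eq]
    exact (Nat.card_range_of_injective ((embed_injective i).comp (nbr_injective a))).trans
      (Nat.card_fin 3)
  isAcyclic := by
    have hnbr : ∀ {i a x}, ((flower ι).comap Sum.inl).Adj (i, a) x →
        ∃ k, nbr a k = .inl x.2 ∧ x.1 = i := fun {i a x} h => by
      obtain ⟨k, hk : embed i (nbr a k) = .inl x⟩ := (neighborSet_flower_inl i a).le h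
      rcases hka : nbr a k with a' | b <;> rw [hka] at hk <;> cases hk
      exact ⟨k, hka, rfl⟩
    refine isAcyclic_of_height (fun x => height x.2) ?_
    rintro ⟨i, a⟩ ⟨i₁, a₁⟩ ⟨i₂, a₂⟩ h₁ h₂ hle₁ hle₂
    obtain ⟨k₁, hk₁, rfl⟩ := hnbr h₁
    obtain ⟨k₂, hk₂, rfl⟩ := hnbr h₂
    cases eq_of_height_le a k₁ k₂ ⟨a₁, hk₁, hle₁⟩ ⟨a₂, hk₂, hle₂⟩
    cases hk₁.symm.trans hk₂
    rfl
  four_le_ncard_crossing _ _ _ := four_le_ncard_crossing_flower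

/-- The petal `i` of a flower without the supervertex shared by all petals. -/
def petal (i : ι) : Set (ι × Joint ⊕ FlowerBlob ι) :=
  embed i '' {.inr root}ᶜ

theorem disjoint_petal (hi : i ≠ i') : Disjoint (petal i) (petal i') := by
  rw [Set.disjoint_left]
  rintro _ ⟨a | b, hx, rfl⟩ ⟨a' | b', -, heq⟩
  · exact hi (congrArg Prod.fst (Sum.inl_injective heq)).symm
  · cases heq
  · cases heq
  · have hb : b ≠ root := fun h => hx (congrArg Sum.inr h)
    exact hi ((place_eq_place_iff hb).1 (Sum.inr_injective heq)).1.symm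

theorem not_hasFlowOn_petal [Fintype ι] (i : ι) : ¬ HasFlowOn (flower ι) (petal i) := by
  rintro ⟨c, hsymm, hadj, hsum⟩
  have hzero : ∀ {x x'}, ¬(flower ι).Adj x x' → c x x' = 0 := fun h => not_not.1 (mt (hadj _ _).1 h)
  refine not_isPetalFlow (fun x x' => c (embed i x) (embed i x'))
    ⟨fun _ _ => hsymm _ _, fun a k => (hadj _ _).2 (flower_adj_embed_nbr i a k), fun a => ?_,
      fun b hb => ?_⟩
  · rw [← hsum _ ⟨.inl a, Sum.inl_ne_inr, rfl⟩]
    exact (sum_eq_sum_of_neighborSet_eq ((embed_injective i).comp (nbr_injective a))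
      (neighborSet_flower_inl i a) fun _ => hzero).symm
  · rw [← hsum _ ⟨.inr b, fun h => hb (Sum.inr_injective h), rfl⟩]
    exact (sum_eq_sum_of_neighborSet_eq
      ((embed_injective i).comp (Sum.inl_injective.comp (contact_injective b)))
      (neighborSet_flower_inr i hb) fun _ => hzero).symm

end Graph

end Flower

/-- For every g ≥ 5 there is a snark (cyclically 4-edge-connected, girth ≥ 5, cubic,
not 3-edge-colourable) with girth at least g and circumference deficit at least g. -/
theorem stmt_10 (g : ℕ) (hg : 5 ≤ g) :
    ∃ (V : Type) (_ : Fintype V) (G : SimpleGraph V),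
      IsCubic G ∧ CyclicallyEdgeConnected G 4 ∧ ¬ Is3EdgeColorable G ∧
      (g : ℕ∞) ≤ G.girth ∧ g ≤ Fintype.card V - circumference G := by
  obtain ⟨V, instV, G, π, hcubic, hcyclic, hlen, hπ⟩ :=
    exists_expansion (isTemplate_flower (ι := Fin (g + 1))) g
  have hflow : ∀ i : Fin (g + 1), ¬ HasFlowOn G (π ⁻¹' petal i) := fun i h =>
    not_hasFlowOn_petal i (hπ.hasFlowOn h)
  have hdisj : ∀ i j : Fin (g + 1), i ≠ j → Disjoint (π ⁻¹' petal i) (π ⁻¹' petal j) :=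
    fun _ _ hij => (disjoint_petal hij).preimage π
  have : Nonempty V :=
    ⟨(hπ.existsUnique_adj (flower_adj_embed_nbr 0 (Joint.hub none 0) 0)).exists.choose.1⟩
  have hdeg : ∀ v, 2 ≤ (G.neighborSet v).ncard := fun v => (hcubic v).symm ▸ Nat.le_succ 2
  refine ⟨V, instV, G, hcubic, hcyclic, fun hcol => ?_, ?_, ?_⟩
  · obtain ⟨c, hc⟩ := hcol.exists_isRainbowOn
    exact hflow 0 ((hc.hasFlowOn hcubic).mono (Set.subset_univ _))
  · exact_mod_cast le_girth_of_forall_isCycle hdeg fun v w hw => (hlen v w hw).le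
  · refine le_card_sub_circumference (not_isAcyclic_of_two_le_ncard_neighborSet hdeg) ?_
    intro v w hw
    have hcard := length_add_card_le_of_not_hasFlowOn hcubic hdisj hflow hw
    rw [Fintype.card_fin] at hcard
    omega
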